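/- arXiv:2006.00355 — 15 statements merged into one kernel-verified Lean document; each statement's English description precedes it below -/
import Mathlib

section
/- Let p be an odd prime, n ≥ 4 an integer, and t an integer with 1 ≤ t < n; set d = gcd(t, n) and assume n ≥ 3d and that n/d is even. Let c ∈ F_{p^n} with c ≠ 1, and let G : F_{p^n} → F_{p^n} be given by G(x) = x^{p^n−2} + x^{p^t}. Then the c-differential uniformity of G satisfies p^d + 2 ≤ δ_{G,c} ≤ p^t + 4. -/
open Finset

/-- The `(c,a,b)` entry of the `c`-Difference Distribution Table of `G`:
the number of `x` with `G (x + a) - c * G x = b`. -/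
def cddt {F : Type*} [Field F] [Fintype F] [DecidableEq F]
    (G : F → F) (c a b : F) : ℕ :=
  (Finset.univ.filter fun x : F => G (x + a) - c * G x = b).card

/-- The `c`-differential uniformity of `G`: the maximum entry of the `c`-DDT,
where `a ≠ 0` is required only when `c = 1`. -/
def cdu {F : Type*} [Field F] [Fintype F] [DecidableEq F]
    (G : F → F) (c : F) : ℕ :=
  ((Finset.univ : Finset (F × F)).filter fun p => c = 1 → p.1 ≠ 0).sup
    fun p => cddt G c p.1 p.2

lemma aux_upper {F : Type*} [Field F] [Fintype F] [DecidableEq F]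
    (q : ℕ) (hq : 1 ≤ q) (c : F) (hc : c ≠ 1)
    (G : F → F) (hG : ∀ x : F, x ≠ 0 → G x = x⁻¹ + x ^ q) (a b : F) :
    cddt G c a b ≤ q + 4 := by
  classical
  open Polynomial in
  obtain ⟨P, hP0, hPd, hPe⟩ : ∃ P : F[X], P ≠ 0 ∧ P.natDegree ≤ q + 2 ∧ ∀ x : F, P.eval x =
      x * (x + a) ^ (q + 1) - c * (x ^ (q + 1) * (x + a)) + (x - c * (x + a) - b * (x * (x + a))) := by
    let A : F[X] := X * (X + C a) ^ (q + 1)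
    let B : F[X] := X ^ (q + 1) * (X + C a)
    let R : F[X] := X - C c * (X + C a) - C b * (X * (X + C a))
    have hA : A.Monic := monic_X.mul ((monic_X_add_C a).pow _)
    have hB : B.Monic := (monic_X_pow _).mul (monic_X_add_C a)
    have hAd : A.natDegree = q + 2 := by
      rw [Monic.natDegree_mul monic_X ((monic_X_add_C a).pow _),
        Monic.natDegree_pow (monic_X_add_C a)]
      simp; ring
    have hBd : B.natDegree = q + 2 := by
      rw [Monic.natDegree_mul (monic_X_pow _) (monic_X_add_C a)]
      simp
    have hRd : R.natDegree ≤ 2 := by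
      simp only [R]; compute_degree
    have hcoef : (A - C c * B + R).coeff (q + 2) = 1 - c := by
      have h1 : A.coeff (q + 2) = 1 := by rw [← hAd]; exact hA
      have h2 : B.coeff (q + 2) = 1 := by rw [← hBd]; exact hB
      have h3 : R.coeff (q + 2) = 0 := coeff_eq_zero_of_natDegree_lt (by omega)
      rw [coeff_add, coeff_sub, coeff_C_mul, h1, h2, h3]; ring
    refine ⟨A - C c * B + R, ?_, ?_, ?_⟩
    · intro h
      rw [h, coeff_zero] at hcoef
      exact hc (sub_eq_zero.mp hcoef.symm).symm
    · refine (natDegree_add_le _ _).trans (max_le ((natDegree_sub_le _ _).trans (max_le hAd.le ?_)) (by omega))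
      exact (natDegree_C_mul_le _ _).trans hBd.le
    · intro x
      simp [A, B, R]
  have hsub : (Finset.univ.filter fun x : F => G (x + a) - c * G x = b) ⊆
      insert 0 (insert (-a) P.roots.toFinset) := by
    intro x hx
    simp only [Finset.mem_filter, Finset.mem_univ, true_and] at hx
    by_cases h0 : x = 0
    · simp [h0]
    by_cases h1 : x + a = 0
    · have : x = -a := eq_neg_of_add_eq_zero_left h1
      simp [this]
    · rw [hG _ h0, hG _ h1] at hx
      simp only [Finset.mem_insert, Multiset.mem_toFinset]
      right; right
      rw [Polynomial.mem_roots hP0, Polynomial.IsRoot, hPe, ← hx]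
      field_simp
      ring
  unfold cddt
  refine (Finset.card_le_card hsub).trans ?_
  have h1 := Finset.card_insert_le (0 : F) (insert (-a) P.roots.toFinset)
  have h2 := Finset.card_insert_le (-a) P.roots.toFinset
  have h3 := P.roots.toFinset_card_le
  have h4 := P.card_roots'
  omega

lemma aux_roots {F : Type*} [Field F] [Fintype F] [DecidableEq F]
    (m k : ℕ) (h : Fintype.card F - 1 = 2 * m * k) :
    m ≤ (Finset.univ.filter fun x : F => x ^ m = -1).card := by
  obtain ⟨g, hg⟩ := IsCyclic.exists_generator (α := Fˣ)
  have hord : orderOf g = 2 * m * k := by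
    rw [orderOf_eq_card_of_forall_mem_zpowers hg, Nat.card_eq_fintype_card, Fintype.card_units, h]
  have hpos : 0 < 2 * m * k := hord ▸ orderOf_pos g
  have hk : 0 < k := Nat.pos_of_mul_pos_left hpos |> fun _ => by
    rcases Nat.eq_zero_or_pos k with h | h
    · simp [h] at hpos
    · exact h
  have hm : 0 < m := by
    rcases Nat.eq_zero_or_pos m with h | h
    · simp [h] at hpos
    · exact h
  have hinj : ∀ i j, i < 2 * m * k → j < 2 * m * k → (g : F) ^ i = (g : F) ^ j → i = j := by
    intro i j hi hj hij
    have : g ^ i = g ^ j := Units.ext (by simpa using hij)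
    exact pow_injOn_Iio_orderOf (by simpa [hord] using hi) (by simpa [hord] using hj) this
  have hkm : 0 < m * k := Nat.mul_pos hm hk
  have hneg : (g : F) ^ (m * k) = -1 := by
    have h2 : ((g : F) ^ (m * k)) ^ 2 = 1 := by
      rw [← pow_mul, show m * k * 2 = orderOf g by rw [hord]; ring, ← Units.val_pow_eq_pow_val,
        pow_orderOf_eq_one, Units.val_one]
    rcases (sq_eq_sq_iff_eq_or_eq_neg.mp (h2.trans (one_pow 2).symm)) with h | h
    · exfalso
      have := hinj (m * k) 0 (by nlinarith) hpos (by simpa using h)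
      omega
    · exact h
  have himg : (Finset.range m).image (fun i => (g : F) ^ (k * (2 * i + 1))) ⊆
      Finset.univ.filter fun x : F => x ^ m = -1 := by
    intro x hx
    obtain ⟨i, -, rfl⟩ := Finset.mem_image.mp hx
    simp only [Finset.mem_filter, Finset.mem_univ, true_and]
    rw [← pow_mul, show k * (2 * i + 1) * m = m * k * (2 * i + 1) by ring, pow_mul, hneg]
    exact Odd.neg_one_pow ⟨i, rfl⟩
  have hcard : ((Finset.range m).image (fun i => (g : F) ^ (k * (2 * i + 1)))).card = m := by
    rw [Finset.card_image_of_injOn, Finset.card_range]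
    intro i hi j hj hij
    have hi : i < m := by simpa using hi
    have hj : j < m := by simpa using hj
    have := hinj _ _ (by nlinarith) (by nlinarith) hij
    have := Nat.eq_of_mul_eq_mul_left hk this
    omega
  rw [← hcard]
  exact (Finset.card_le_card himg).trans_eq (by rw [hcard])

theorem cdu_inverse_plus_monomial_odd_char_even_case
    {F : Type*} [Field F] [Fintype F] [DecidableEq F]
    (p n t : ℕ) (hp : p.Prime) (hodd : Odd p)
    (hn : 4 ≤ n) (ht1 : 1 ≤ t) (htn : t < n)
    (h3d : 3 * Nat.gcd t n ≤ n) (heven : Even (n / Nat.gcd t n))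
    (hF : Fintype.card F = p ^ n)
    (c : F) (hc : c ≠ 1)
    (G : F → F) (hG : ∀ x : F, G x = x ^ (p ^ n - 2) + x ^ p ^ t) :
    p ^ Nat.gcd t n + 2 ≤ cdu G c ∧ cdu G c ≤ p ^ t + 4 := by
  have hcard2 : 3 ≤ p ^ n := by
    have h3 : 3 ≤ p := by
      have := hp.two_le
      obtain ⟨r, hr⟩ := hodd
      omega
    calc 3 ≤ p := h3
      _ = p ^ 1 := (pow_one p).symm
      _ ≤ p ^ n := Nat.pow_le_pow_right (by omega) (by omega)
  have hG0 : G 0 = 0 := by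
    rw [hG, zero_pow (by omega), zero_pow (pow_ne_zero _ hp.ne_zero), add_zero]
  have hG1 : ∀ x : F, x ≠ 0 → G x = x⁻¹ + x ^ p ^ t := by
    intro x hx
    rw [hG]
    congr 1
    apply eq_inv_of_mul_eq_one_left
    rw [← pow_succ, show p ^ n - 2 + 1 = Fintype.card F - 1 by omega]
    exact FiniteField.pow_card_sub_one_eq_one x hx
  constructor
  · set d := Nat.gcd t n with hd
    have hdpos : 0 < d := Nat.gcd_pos_of_pos_left _ ht1
    obtain ⟨s, hs⟩ : d ∣ t := Nat.gcd_dvd_left _ _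
    obtain ⟨r, hr⟩ : d ∣ n := Nat.gcd_dvd_right _ _
    have hr2 : Even r := by
      rwa [hr, Nat.mul_div_cancel_left _ hdpos] at heven
    obtain ⟨e, he⟩ := hr2
    have hsodd : Odd s := by
      by_contra hcon
      rw [Nat.not_odd_iff_even] at hcon
      obtain ⟨f, hf⟩ := hcon
      have h1 : 2 * d ∣ Nat.gcd t n := Nat.dvd_gcd ⟨f, by rw [hs, hf]; ring⟩ ⟨e, by rw [hr, he]; ring⟩
      have := Nat.le_of_dvd (by omega) h1
      omega
    obtain ⟨j, hj⟩ := hsodd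
    have hPodd : Odd (p ^ d) := hodd.pow
    obtain ⟨k, hk⟩ : 2 * (p ^ d + 1) ∣ Fintype.card F - 1 := by
      have h1 : (p ^ d) ^ 2 - 1 ∣ ((p ^ d) ^ 2) ^ e - 1 := by
        simpa using Nat.sub_dvd_pow_sub_pow ((p ^ d) ^ 2) 1 e
      have h2 : ((p ^ d) ^ 2) ^ e = p ^ n := by
        rw [← pow_mul, ← pow_mul, hr, he]; congr 1; ring
      rw [hF, ← h2]
      refine dvd_trans ?_ h1
      obtain ⟨u, hu⟩ := hPodd
      refine ⟨u, ?_⟩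
      rw [hu]
      have : (2 * u + 1) ^ 2 = 2 * (2 * u + 1 + 1) * u + 1 := by ring
      omega
    have hroots := aux_roots (F := F) (p ^ d + 1) k hk
    have hkey : insert (0 : F) (Finset.univ.filter fun x : F => x ^ (p ^ d + 1) = -1) ⊆
        Finset.univ.filter fun x : F => G (x + 0) - c * G x = 0 := by
      intro x hx
      simp only [Finset.mem_insert, Finset.mem_filter, Finset.mem_univ, true_and, add_zero] at hx ⊢
      rcases hx with rfl | hx
      · simp [hG0]
      · have hx0 : x ≠ 0 := by
          rintro rfl
          simp at hx
        have h1 : x ^ p ^ d = -x⁻¹ := by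
          rw [pow_succ] at hx
          field_simp
          exact hx
        have h2 : x ^ (p ^ d) ^ 2 = x := by
          rw [sq, pow_mul, h1, hPodd.neg_pow, inv_pow, h1]
          simp
        have h3 : ∀ i : ℕ, x ^ ((p ^ d) ^ 2) ^ i = x := by
          intro i
          induction i with
          | zero => simp
          | succ i ih => rw [pow_succ, pow_mul, ih, h2]
        have h4 : x ^ p ^ t = -x⁻¹ := by
          rw [hs, hj, pow_mul, pow_succ, pow_mul (p ^ d), pow_mul, h3, h1]
        rw [hG1 x hx0, h4]; simp
    have h5 := Finset.card_le_card hkey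
    rw [Finset.card_insert_of_notMem (by simp)] at h5
    have h6 : cddt G c 0 0 ≤ cdu G c :=
      Finset.le_sup (f := fun p : F × F => cddt G c p.1 p.2) (b := ((0, 0) : F × F)) (by simp [hc])
    unfold cddt at h6
    omega
  · unfold cdu
    apply Finset.sup_le
    intro ab _
    exact aux_upper _ (Nat.one_le_pow _ _ hp.pos) c hc G hG1 _ _
end

section
/- Let p be a prime, n ≥ 4 an integer, and t ≥ 1 a divisor of n such that n/t is even. Let G : F_{p^n} → F_{p^n} be given by G(x) = x^{p^n−2} + x^{p^t}. Then there exists c ∈ F_{p^n} with c ≠ 1 such that the c-differential uniformity of G satisfies δ_{G,c} ≥ p^t + 2. -/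
open Finset

theorem exists_c_with_large_cdu
    {F : Type*} [Field F] [Fintype F] [DecidableEq F]
    (p n t : ℕ) (hp : p.Prime) (hn : 4 ≤ n)
    (ht1 : 1 ≤ t) (htdvd : t ∣ n) (heven : Even (n / t))
    (hF : Fintype.card F = p ^ n)
    (G : F → F) (hG : ∀ x : F, G x = x ^ (p ^ n - 2) + x ^ p ^ t) :
    ∃ c : F, c ≠ 1 ∧ p ^ t + 2 ≤ cdu G c := by
  refine ⟨0, zero_ne_one, ?_⟩
  set q := p ^ t with hq
  have hq2 : 2 ≤ q := le_trans hp.two_le (Nat.le_self_pow (by omega) p)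
  have hpn : 4 ≤ p ^ n := by
    calc 4 = 2 ^ 2 := by norm_num
      _ ≤ p ^ 2 := Nat.pow_le_pow_left hp.two_le 2
      _ ≤ p ^ n := Nat.pow_le_pow_right hp.pos (by omega)
  -- factor the order of the unit group
  obtain ⟨k, hk⟩ : ∃ k, p ^ n - 1 = (q + 1) * ((q - 1) * k) := by
    obtain ⟨s, hs⟩ := heven
    have h1 : p ^ n = (q ^ 2) ^ s := by
      rw [hq, ← pow_mul, ← pow_mul]
      congr 1
      rw [← Nat.mul_div_cancel' htdvd, hs]; ring
    obtain ⟨k, hk⟩ := Nat.sub_dvd_pow_sub_pow (q ^ 2) 1 s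
    refine ⟨k, ?_⟩
    rw [h1]
    rw [one_pow] at hk
    rw [hk, ← mul_assoc]
    congr 1
    have := Nat.sq_sub_sq q 1
    simpa using this
  have hcardU : Fintype.card Fˣ = p ^ n - 1 := by rw [Fintype.card_units, hF]
  obtain ⟨g, hg⟩ := IsCyclic.exists_generator (α := Fˣ)
  have hord : orderOf g = (q + 1) * ((q - 1) * k) := by
    rw [orderOf_eq_card_of_forall_mem_zpowers hg, Nat.card_eq_fintype_card, hcardU, hk]
  have hMpos : 0 < (q - 1) * k := by
    rcases Nat.eq_zero_or_pos ((q - 1) * k) with h | h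
    · rw [h] at hk; omega
    · exact h
  have hneg : ((-1 : Fˣ)) ^ ((q - 1) * k) = 1 := by
    rcases hp.eq_two_or_odd' with h2 | ho
    · have : CharP F 2 := by
        subst h2
        haveI : Fact (Nat.Prime 2) := ⟨hp⟩
        exact charP_of_card_eq_prime_pow hF
      have : (-1 : Fˣ) = 1 := by
        ext; simp [CharTwo.neg_eq]
      rw [this, one_pow]
    · have : Even (q - 1) := by
        have : Odd q := ho.pow
        exact Nat.Odd.sub_odd this odd_one
      exact (this.mul_right k).neg_one_pow
  obtain ⟨α, hα⟩ : ∃ α : F, α ^ (q + 1) = -1 := by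
    obtain ⟨j, hj⟩ := (mem_powers_iff_mem_zpowers.2 (hg (-1)))
    simp only at hj
    rw [← hj, ← pow_mul] at hneg
    have hd := orderOf_dvd_of_pow_eq_one hneg
    rw [hord] at hd
    obtain ⟨i, rfl⟩ := Nat.dvd_of_mul_dvd_mul_right hMpos hd
    refine ⟨((g ^ i : Fˣ) : F), ?_⟩
    rw [← Units.val_pow_eq_pow_val, ← pow_mul, mul_comm i, hj]
    simp
  have hprim : IsPrimitiveRoot ((g ^ ((q - 1) * k) : Fˣ) : F) (q + 1) := by
    rw [IsPrimitiveRoot.coe_units_iff]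
    have := (IsPrimitiveRoot.orderOf g).pow (n := orderOf g) (orderOf_pos g)
      (a := (q - 1) * k) (b := q + 1) (by rw [hord, mul_comm])
    exact this
  have hcard : (Polynomial.nthRoots (q + 1) (-1 : F)).toFinset.card = q + 1 := by
    rw [Multiset.toFinset_card_of_nodup (hprim.nthRoots_nodup (neg_ne_zero.2 one_ne_zero)),
      hprim.card_nthRoots, if_pos ⟨α, hα⟩]
  have hmem : ∀ x : F, x ∈ (Polynomial.nthRoots (q + 1) (-1 : F)).toFinset ↔
      x ^ (q + 1) = -1 := by
    intro x
    rw [Multiset.mem_toFinset, Polynomial.mem_nthRoots (by omega)]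
  have h0 : (0 : F) ∉ (Polynomial.nthRoots (q + 1) (-1 : F)).toFinset := by
    rw [hmem]; simp
  have hc : q + 2 ≤ cddt G 0 0 0 := by
    have : (insert 0 (Polynomial.nthRoots (q + 1) (-1 : F)).toFinset).card = q + 2 := by
      rw [card_insert_of_notMem h0, hcard]
    rw [← this]
    apply card_le_card
    intro x hx
    simp only [mem_filter, mem_univ, true_and, add_zero, zero_mul, sub_zero, hG]
    rcases mem_insert.1 hx with rfl | hx
    · rw [zero_pow (by omega), zero_pow (by omega), add_zero]
    · have hx0 : x ≠ 0 := by rintro rfl; exact h0 hx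
      rw [hmem] at hx
      apply mul_right_cancel₀ hx0
      rw [add_mul, ← pow_succ, ← pow_succ, hx, show p ^ n - 2 + 1 = Fintype.card F - 1 by omega,
        FiniteField.pow_card_sub_one_eq_one x hx0]
      simp
  refine hc.trans ?_
  exact Finset.le_sup (f := fun p : F × F => cddt G 0 p.1 p.2) (b := (0, 0)) (by simp)
end

section
/- Let n ≥ 4 be an even integer and let G : F_{2^n} → F_{2^n} be given by G(x) = x^{2^n−2} + x. Then there exists c ∈ F_{2^n} with c ≠ 1 such that the c-differential uniformity of G satisfies δ_{G,c} = 5. -/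
open Finset

theorem exists_c_cdu_eq_five_even
    {F : Type*} [Field F] [Fintype F] [DecidableEq F]
    (n : ℕ) (hn : 4 ≤ n) (hneven : Even n)
    (hF : Fintype.card F = 2 ^ n)
    (G : F → F) (hG : ∀ x : F, G x = x ^ (2 ^ n - 2) + x) :
    ∃ c : F, c ≠ 1 ∧ cdu G c = 5 := by
  have h16 : 2 ^ 4 ≤ 2 ^ n := Nat.pow_le_pow_right (by norm_num) hn
  have h2 : (2 : F) = 0 := by
    have h := FiniteField.cast_card_eq_zero F
    rw [hF] at h
    push_cast at h
    exact pow_eq_zero_iff (by omega) |>.1 h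
  have hG' : ∀ x : F, G x = x⁻¹ + x := by
    intro x
    rw [hG]
    congr 1
    by_cases hx : x = 0
    · subst hx
      rw [inv_zero, zero_pow (by omega)]
    · have h := FiniteField.pow_card_sub_one_eq_one x hx
      rw [hF, show 2 ^ n - 1 = (2 ^ n - 2) + 1 by omega, pow_succ] at h
      exact eq_inv_of_mul_eq_one_left h
  obtain ⟨w, hw⟩ : ∃ w : F, w ^ 2 + w + 1 = 0 := by
    have h3 : 3 ∣ Fintype.card Fˣ := by
      rw [Fintype.card_units, hF]
      obtain ⟨m, rfl⟩ := hneven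
      rw [← two_mul, pow_mul]
      have h := Nat.sub_dvd_pow_sub_pow (2 ^ 2) 1 m
      norm_num at h ⊢
      exact h
    obtain ⟨g, hg⟩ := exists_prime_orderOf_dvd_card (G := Fˣ) 3 h3
    have h1 : (g : F) ^ 3 = 1 := by
      rw [← Units.val_pow_eq_pow_val, ← hg, pow_orderOf_eq_one, Units.val_one]
    have hne : (g : F) ≠ 1 := by
      intro h
      have : g = 1 := Units.ext h
      rw [this, orderOf_one] at hg
      omega
    refine ⟨g, ?_⟩
    have h : ((g : F) - 1) * ((g : F) ^ 2 + g + 1) = 0 := by linear_combination h1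
    exact (mul_eq_zero.1 h).resolve_left (sub_ne_zero.2 hne)
  obtain ⟨u, hu⟩ : ∃ u : F, u ∉ ({0, 1, w, w ^ 2} : Finset F) := by
    by_contra! h
    have h5 : (Finset.univ : Finset F) ⊆ {0, 1, w, w ^ 2} := fun x _ => h x
    have h6 := (Finset.card_le_card h5).trans Finset.card_le_four
    rw [Finset.card_univ, hF] at h6
    omega
  simp only [Finset.mem_insert, Finset.mem_singleton, not_or] at hu
  obtain ⟨hu0, hu1, huw, huw2⟩ := hu
  have hneg : ∀ x : F, -x = x := fun x => by linear_combination -x * h2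
  have hadd : ∀ x y : F, x ≠ y → x + y ≠ 0 := by
    intro x y h h'
    exact h (by linear_combination h' - y * h2)
  have hw0 : w ≠ 0 := by
    rintro rfl
    simp at hw
  have hw1 : w ≠ 1 := by
    rintro rfl
    exact one_ne_zero (α := F) (by linear_combination hw - h2)
  have hw3 : w ^ 3 = 1 := by linear_combination (w - 1) * hw
  have hww : w ^ 2 ≠ w := by
    intro h
    exact one_ne_zero (α := F) (by linear_combination hw - h - w * h2)
  have hw21 : w ^ 2 ≠ 1 := by
    intro h
    exact hw0 (by linear_combination hw - h - h2)
  have hc1 : u ^ 3 ≠ 1 := by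
    intro h
    have : (u - 1) * ((u - w) * (u - w ^ 2)) = 0 := by
      linear_combination h + (u - u ^ 2) * hw + (u - 1) * hw3
    rcases mul_eq_zero.1 this with h | h
    · exact hu1 (sub_eq_zero.1 h)
    rcases mul_eq_zero.1 h with h | h
    · exact huw (sub_eq_zero.1 h)
    · exact huw2 (sub_eq_zero.1 h)
  refine ⟨u ^ 3, hc1, le_antisymm ?_ ?_⟩
  · -- upper bound
    refine Finset.sup_le ?_
    rintro ⟨a, b⟩ -
    generalize u ^ 3 = c at hc1
    have hc : 1 + c ≠ 0 := hadd 1 c (Ne.symm hc1)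
    let P : Polynomial F := Polynomial.C (1 + c) * Polynomial.X ^ 3
      + Polynomial.C (a * c + b) * Polynomial.X ^ 2
      + Polynomial.C (1 + a ^ 2 + c + a * b) * Polynomial.X + Polynomial.C (a * c)
    have hdeg : P.natDegree = 3 := Polynomial.natDegree_cubic hc
    have hP0 : P ≠ 0 := by
      intro h
      rw [h] at hdeg
      simp at hdeg
    have hsub : (Finset.univ.filter fun x : F => G (x + a) - c * G x = b)
        ⊆ {0, a} ∪ P.roots.toFinset := by
      intro x hx
      simp only [Finset.mem_filter, Finset.mem_univ, true_and, hG'] at hx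
      by_cases hx0 : x = 0
      · simp [hx0]
      by_cases hxa : x = a
      · simp [hxa]
      have hs := hadd x a hxa
      refine Finset.mem_union_right _ ?_
      rw [Multiset.mem_toFinset, Polynomial.mem_roots hP0]
      simp only [P, Polynomial.IsRoot.def, Polynomial.eval_add, Polynomial.eval_mul,
        Polynomial.eval_C, Polynomial.eval_pow, Polynomial.eval_X]
      field_simp at hx
      grind
    have h1 : ({0, a} : Finset F).card ≤ 2 := Finset.card_le_two
    have h3 : P.roots.toFinset.card ≤ 3 :=
      (Multiset.toFinset_card_le _).trans (hdeg ▸ Polynomial.card_roots' P)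
    calc _ ≤ _ := Finset.card_le_card hsub
      _ ≤ _ := Finset.card_union_le _ _
      _ ≤ 5 := by omega
  · -- lower bound
    have hmem : ((1, 0) : F × F) ∈ ((Finset.univ : Finset (F × F)).filter
        fun p => u ^ 3 = 1 → p.1 ≠ 0) := by simp
    have hle : cddt G (u ^ 3) 1 0 ≤ cdu G (u ^ 3) := by
      unfold cdu
      exact Finset.le_sup (f := fun p : F × F => cddt G (u ^ 3) p.1 p.2) hmem
    refine le_trans ?_ hle
    unfold cddt
    have key : ∀ v : F, v ^ 3 = 1 → u ≠ v → G (u / (u + v) + 1) - u ^ 3 * G (u / (u + v)) = 0 := by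
      intro v hv huv
      have hs := hadd u v huv
      have hv0 : v ≠ 0 := by
        rintro rfl
        simp at hv
      have e : u / (u + v) + 1 = v / (u + v) := by
        field_simp
        linear_combination u * h2
      rw [e, hG', hG']
      have e1 : (v / (u + v))⁻¹ + v / (u + v) = u ^ 2 / (v * (u + v)) := by
        field_simp
        linear_combination (u * v + v ^ 2) * h2
      have e2 : (u / (u + v))⁻¹ + u / (u + v) = v ^ 2 / (u * (u + v)) := by
        field_simp
        linear_combination (u * v + u ^ 2) * h2
      rw [e1, e2]
      field_simp
      linear_combination -u ^ 2 * hv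
    have inj : ∀ v v' : F, u ≠ v → u ≠ v' → v ≠ v' → u / (u + v) ≠ u / (u + v') := by
      intro v v' h h' hne he
      rw [div_eq_div_iff (hadd u v h) (hadd u v' h')] at he
      have := mul_left_cancel₀ hu0 he
      exact hne (add_left_cancel this).symm
    have ne0 : ∀ v : F, u ≠ v → (0 : F) ≠ u / (u + v) := fun v h =>
      (div_ne_zero hu0 (hadd u v h)).symm
    have ne1 : ∀ v : F, v ≠ 0 → u ≠ v → (1 : F) ≠ u / (u + v) := by
      intro v hv h he
      rw [eq_div_iff (hadd u v h)] at he
      exact hv (by linear_combination he)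
    have hcard : ({0, 1, u / (u + 1), u / (u + w), u / (u + w ^ 2)} : Finset F).card = 5 := by
      rw [Finset.card_insert_of_notMem, Finset.card_insert_of_notMem,
        Finset.card_insert_of_notMem, Finset.card_pair (inj _ _ huw huw2 hww.symm)]
      · simp only [Finset.mem_insert, Finset.mem_singleton, not_or]
        exact ⟨inj _ _ hu1 huw hw1.symm, inj _ _ hu1 huw2 hw21.symm⟩
      · simp only [Finset.mem_insert, Finset.mem_singleton, not_or]
        exact ⟨ne1 _ one_ne_zero hu1, ne1 _ hw0 huw, ne1 _ (pow_ne_zero 2 hw0) huw2⟩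
      · simp only [Finset.mem_insert, Finset.mem_singleton, not_or]
        exact ⟨zero_ne_one, ne0 _ hu1, ne0 _ huw, ne0 _ huw2⟩
    rw [← hcard]
    refine Finset.card_le_card ?_
    have h11 : (1 : F) + 1 = 0 := by linear_combination h2
    intro x hx
    simp only [Finset.mem_insert, Finset.mem_singleton] at hx
    simp only [Finset.mem_filter, Finset.mem_univ, true_and]
    rcases hx with rfl | rfl | rfl | rfl | rfl
    · simp [hG', h11]
    · simp [hG', h11]
    · exact key 1 (one_pow 3) hu1
    · exact key w hw3 huw
    · exact key (w ^ 2) (by linear_combination (w ^ 3 + 1) * hw3) huw2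
end

section
/- Let n ≥ 5 be an odd integer and let G : F_{2^n} → F_{2^n} be given by G(x) = x^{2^n−2} + x. Then there exists c ∈ F_{2^n} with c ≠ 1 such that the c-differential uniformity of G satisfies δ_{G,c} = 4. -/
open Finset

lemma aux_cubic {F : Type*} [Field F] [Fintype F] [DecidableEq F] (A B C D : F) (hA : A ≠ 0) :
    (Finset.univ.filter fun x : F => A * x ^ 3 + B * x ^ 2 + C * x + D = 0).card ≤ 3 := by
  classical
  let P : Polynomial F := Polynomial.C A * Polynomial.X ^ 3 + Polynomial.C B * Polynomial.X ^ 2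
    + Polynomial.C C * Polynomial.X + Polynomial.C D
  have hd : P.natDegree = 3 := Polynomial.natDegree_cubic hA
  have hP : P ≠ 0 := by
    intro h; rw [h] at hd; simp at hd
  calc _ ≤ P.roots.toFinset.card := by
        apply Finset.card_le_card
        intro x hx
        simp only [Finset.mem_filter, Finset.mem_univ, true_and] at hx
        rw [Multiset.mem_toFinset, Polynomial.mem_roots hP]
        simp [P, Polynomial.IsRoot, hx]
    _ ≤ P.roots.card := Multiset.toFinset_card_le _
    _ ≤ P.natDegree := Polynomial.card_roots' _
    _ = 3 := hd

lemma aux_omega {F : Type*} [Field F] [Fintype F] (n : ℕ) (hnodd : Odd n)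
    (hF : Fintype.card F = 2 ^ n) (h2 : (2 : F) = 0) (k : F) : k ^ 2 + k + 1 ≠ 0 := by
  intro h
  have h3 : k ^ 3 = 1 := by linear_combination (k - 1) * h
  have hp : k ^ (2 ^ n) = k := by rw [← hF]; exact FiniteField.pow_card k
  obtain ⟨m, rfl⟩ := hnodd
  have hm : 2 ^ (2 * m + 1) % 3 = 2 := by
    rw [pow_succ, pow_mul, Nat.mul_mod, Nat.pow_mod]; simp
  rw [← Nat.div_add_mod (2 ^ (2 * m + 1)) 3, hm, pow_add, pow_mul, h3, one_pow, one_mul] at hp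
  have h0 : (1 : F) = 0 := by
    have : 2 * k + 1 = 0 := by linear_combination h - hp
    rw [h2] at this; simpa using this
  exact one_ne_zero h0

lemma aux_three {F : Type*} [Field F] (h2 : (2 : F) = 0) (hw : ∀ k : F, k ^ 2 + k + 1 ≠ 0)
    (c x y z : F) (hc : c ≠ 1) (hxy : x ≠ y) (hxz : x ≠ z) (hyz : y ≠ z) (hx1 : x ≠ 1)
    (hx : (1 + c) * x ^ 3 + c * x ^ 2 + c * x + c = 0)
    (hy : (1 + c) * y ^ 3 + c * y ^ 2 + c * y + c = 0)
    (hz : (1 + c) * z ^ 3 + c * z ^ 2 + c * z + c = 0) : False := by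
  have e1 : (1 + c) * (x ^ 2 + x * y + y ^ 2) + c * (x + y) + c = 0 := by
    apply mul_left_cancel₀ (sub_ne_zero.2 hxy); linear_combination hx - hy
  have e2 : (1 + c) * (x ^ 2 + x * z + z ^ 2) + c * (x + z) + c = 0 := by
    apply mul_left_cancel₀ (sub_ne_zero.2 hxz); linear_combination hx - hz
  have e3 : (1 + c) * (x + y + z) + c = 0 := by
    apply mul_left_cancel₀ (sub_ne_zero.2 hyz); linear_combination e1 - e2
  have hc1 : 1 + c ≠ 0 := by
    intro h; apply hc; linear_combination h - h2
  -- elementary symmetric functions agree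
  have s1 : x + y + z = x * y + y * z + z * x := by
    apply mul_left_cancel₀ hc1
    linear_combination (x+y+1) * e3 - e1 - (1 + c) * (x * y + y * z + z * x) * h2
  have s2 : x + y + z = x * y * z := by
    apply mul_left_cancel₀ hc1
    grind
  have hx1' : x + 1 ≠ 0 := by
    intro h; apply hx1; linear_combination h - h2
  have hyz' : y + z ≠ 0 := by
    intro h; apply hyz; linear_combination h - z * h2
  apply hw (y / (y + z) + 1 / (x + 1))
  field_simp
  grind

lemma aux_bound {F : Type*} [Field F] [Fintype F] [DecidableEq F] (h2 : (2 : F) = 0)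
    (hw : ∀ k : F, k ^ 2 + k + 1 ≠ 0)
    (G : F → F) (hG : ∀ x : F, G x = x⁻¹ + x) (c : F) (hc : c ≠ 1) (a b : F) :
    cddt G c a b ≤ 4 := by
  have hc1 : 1 + c ≠ 0 := by
    intro h; apply hc; linear_combination h - h2
  unfold cddt
  by_cases ha : a = 0
  · subst ha
    refine le_trans (Finset.card_le_card ?_) ((aux_cubic (1 + c) b (1 + c) 0 hc1).trans (by norm_num))
    intro x
    simp only [Finset.mem_filter, Finset.mem_univ, true_and, hG, add_zero]
    intro h
    by_cases hx : x = 0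
    · simp [hx]
    · field_simp at h
      grind
  set S := Finset.univ.filter fun x : F => G (x + a) - c * G x = b with hS
  set T := Finset.univ.filter fun x : F =>
    (1 + c) * x ^ 3 + (c * a + b) * x ^ 2 + (1 + a ^ 2 + c + a * b) * x + c * a = 0 with hT
  have hT3 : T.card ≤ 3 := aux_cubic _ _ _ _ hc1
  have key : ∀ x ∈ S, x ≠ 0 → x ≠ a → x ∈ T := by
    intro x hx h0 h1
    simp only [hS, hT, Finset.mem_filter, Finset.mem_univ, true_and, hG] at hx ⊢
    have hxa : x + a ≠ 0 := by
      intro h; apply h1; linear_combination h - a * h2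
    field_simp at hx
    grind
  by_cases h0 : 0 ∈ S
  · by_cases h1 : a ∈ S
    · have haa : a + a = 0 := by linear_combination a * h2
      simp only [hS, Finset.mem_filter, Finset.mem_univ, true_and, hG, haa, zero_add,
        inv_zero, mul_zero, sub_zero, add_zero] at h0 h1
      have hz : (1 + c) * (a⁻¹ + a) = 0 := by linear_combination h0 - h1
      have hz := (mul_eq_zero.1 hz).resolve_left hc1
      have hb : b = 0 := by rw [← h0, hz]
      have ha1 : a = 1 := by
        field_simp at hz
        have : (a - 1) ^ 2 = 0 := by linear_combination hz - a * h2
        exact sub_eq_zero.1 (pow_eq_zero_iff (two_ne_zero) |>.1 this)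
      by_contra! hcard
      have hcard2 : 2 < ((S.erase 0).erase a).card := by
        have := Finset.pred_card_le_card_erase (s := S) (a := 0)
        have := Finset.pred_card_le_card_erase (s := S.erase 0) (a := a)
        omega
      obtain ⟨x, hx, y, hy, z, hz', hxy, hxz, hyz⟩ := Finset.two_lt_card.1 hcard2
      simp only [Finset.mem_erase] at hx hy hz'
      have kx := key x hx.2.2 hx.2.1 hx.1
      have ky := key y hy.2.2 hy.2.1 hy.1
      have kz := key z hz'.2.2 hz'.2.1 hz'.1
      have hx1 := hx.1
      simp only [hT, Finset.mem_filter, Finset.mem_univ, true_and, hb, ha1] at kx ky kz hx1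
      refine aux_three h2 hw c x y z hc hxy hxz hyz hx1 ?_ ?_ ?_
      · linear_combination kx - x * h2
      · linear_combination ky - y * h2
      · linear_combination kz - z * h2
    · have : S ⊆ insert 0 T := by
        intro x hx
        by_cases hx0 : x = 0
        · simp [hx0]
        · exact Finset.mem_insert_of_mem (key x hx hx0 (by rintro rfl; exact h1 hx))
      exact (Finset.card_le_card this).trans ((Finset.card_insert_le _ _).trans (by omega))
  · have : S ⊆ insert a T := by
      intro x hx
      by_cases hx0 : x = a
      · simp [hx0]
      · exact Finset.mem_insert_of_mem (key x hx (by rintro rfl; exact h0 hx) hx0)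
    exact (Finset.card_le_card this).trans ((Finset.card_insert_le _ _).trans (by omega))

lemma aux_k {F : Type*} [Field F] [Fintype F] [DecidableEq F] (h : 8 ≤ Fintype.card F) :
    ∃ k : F, k ≠ 0 ∧ 1 + k ≠ 0 ∧ k ^ 5 + k ^ 2 + 1 ≠ 0 := by
  open Polynomial in
  let P : F[X] := X ^ 5 + X ^ 2 + 1
  let Q : F[X] := P * (X * (1 + X))
  have hP : P.natDegree = 5 := by simp only [P]; compute_degree!
  have hQ1 : (X * (1 + X) : F[X]).natDegree = 2 := by
    have : (X * (1 + X) : F[X]) = X ^ 2 + X := by ring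
    rw [this]; compute_degree!
  have hQ : Q.natDegree ≤ 7 := by
    refine (Polynomial.natDegree_mul_le).trans ?_
    rw [hP, hQ1]
  have hP0 : P ≠ 0 := by intro h; rw [h] at hP; simp at hP
  have hQ0 : Q ≠ 0 := by
    refine mul_ne_zero hP0 ?_
    intro h; rw [h] at hQ1; simp at hQ1
  by_contra! hcon
  have : Fintype.card F ≤ 7 := by
    calc Fintype.card F = (Finset.univ : Finset F).card := rfl
      _ ≤ Q.roots.toFinset.card := by
        apply Finset.card_le_card
        intro k _
        rw [Multiset.mem_toFinset, Polynomial.mem_roots hQ0]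
        simp only [Polynomial.IsRoot, Q, P, eval_mul, eval_add, eval_pow, eval_X, eval_one]
        by_cases h0 : k = 0
        · simp [h0]
        by_cases h1 : 1 + k = 0
        · simp [h1]
        · simp [hcon k h0 h1]
      _ ≤ Q.roots.card := Multiset.toFinset_card_le _
      _ ≤ Q.natDegree := Polynomial.card_roots' _
      _ ≤ 7 := hQ
  omega

lemma aux_exists {F : Type*} [Field F] [Fintype F] [DecidableEq F] (h2 : (2 : F) = 0)
    (hw : ∀ k : F, k ^ 2 + k + 1 ≠ 0) (hsq : ∀ z : F, ∃ s, s ^ 2 = z)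
    (h8 : 8 ≤ Fintype.card F)
    (G : F → F) (hG : ∀ x : F, G x = x⁻¹ + x) :
    ∃ c a b : F, c ≠ 1 ∧ 4 ≤ cddt G c a b := by
  obtain ⟨k, k0, k1, k5⟩ := aux_k (F := F) h8
  have kw := hw k
  obtain ⟨s, hs⟩ := hsq ((k ^ 5 + k ^ 2 + 1) / (k ^ 2 * (1 + k) ^ 3))
  have s0 : s ≠ 0 := by
    rintro rfl
    have : (k ^ 5 + k ^ 2 + 1) / (k ^ 2 * (1 + k) ^ 3) ≠ 0 := by positivity
    exact this (by rw [← hs]; simp)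
  have hs' : s ^ 2 * (k ^ 2 * (1 + k) ^ 3) = k ^ 5 + k ^ 2 + 1 := by
    rw [hs]; field_simp
  obtain ⟨e, he⟩ : ∃ e, e = k ^ 2 + k + 1 := ⟨_, rfl⟩
  rw [← he] at kw
  refine ⟨1 / (k ^ 2 * (1 + k) * e), 1 / s, s + 1 / s, ?_, ?_⟩
  · intro h
    field_simp at h
    apply k5
    rw [he] at h
    clear hG hw hsq hs
    grind
  have a1 : 1 / (s * k) + 1 / s = (1 + k) / (s * k) := by field_simp
  have a2 : 1 / (s * k * (1 + k)) + 1 / s = e / (s * k * (1 + k)) := by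
    rw [he]; field_simp; ring
  have a3 : 1 / (s * (1 + k) ^ 2) + 1 / s = k ^ 2 / (s * (1 + k) ^ 2) := by
    field_simp; linear_combination (1 + k) * h2
  have hsub : ({0, 1 / (s * k), 1 / (s * k * (1 + k)), 1 / (s * (1 + k) ^ 2)} : Finset F) ⊆
      Finset.univ.filter fun x : F => G (x + 1 / s) -
        1 / (k ^ 2 * (1 + k) * e) * G x = s + 1 / s := by
    intro x hx
    simp only [Finset.mem_insert, Finset.mem_singleton] at hx
    simp only [Finset.mem_filter, Finset.mem_univ, true_and, hG]
    clear hG hw hsq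
    rcases hx with rfl | rfl | rfl | rfl
    · simp
    · rw [a1]
      clear a1 a2 a3
      field_simp
      rw [hs]
      field_simp
      subst he
      grind
    · rw [a2]
      clear a1 a2 a3
      field_simp
      rw [hs]
      field_simp
      subst he
      grind
    · rw [a3]
      clear a1 a2 a3
      field_simp
      rw [hs]
      field_simp
      subst he
      grind
  unfold cddt
  refine le_trans (le_of_eq ?_) (Finset.card_le_card hsub)
  symm
  have key : ∀ u v : F, u ≠ 0 → v ≠ 0 → u ≠ v → 1 / u ≠ 1 / v := by
    intro u v hu hv h h'
    exact h (by simpa using h')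
  have n1 : s * k ≠ 0 := mul_ne_zero s0 k0
  have n2 : s * k * (1 + k) ≠ 0 := mul_ne_zero n1 k1
  have n3 : s * (1 + k) ^ 2 ≠ 0 := mul_ne_zero s0 (pow_ne_zero _ k1)
  have d12 : s * k ≠ s * k * (1 + k) := by
    intro h
    exact mul_ne_zero n1 k0 (by linear_combination -h)
  have d13 : s * k ≠ s * (1 + k) ^ 2 := by
    intro h
    exact mul_ne_zero s0 kw (by rw [he]; linear_combination -h)
  have d23 : s * k * (1 + k) ≠ s * (1 + k) ^ 2 := by
    intro h
    exact mul_ne_zero s0 k1 (by linear_combination -h)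
  rw [Finset.card_eq_succ]
  refine ⟨0, {1 / (s * k), 1 / (s * k * (1 + k)), 1 / (s * (1 + k) ^ 2)}, ?_, rfl, ?_⟩
  · simp only [Finset.mem_insert, Finset.mem_singleton, not_or]
    exact ⟨(one_div_ne_zero n1).symm, (one_div_ne_zero n2).symm, (one_div_ne_zero n3).symm⟩
  · exact Finset.card_eq_three.2 ⟨_, _, _, key _ _ n1 n2 d12, key _ _ n1 n3 d13,
      key _ _ n2 n3 d23, rfl⟩

theorem exists_c_cdu_eq_four_odd
    {F : Type*} [Field F] [Fintype F] [DecidableEq F]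
    (n : ℕ) (hn : 5 ≤ n) (hnodd : Odd n)
    (hF : Fintype.card F = 2 ^ n)
    (G : F → F) (hG : ∀ x : F, G x = x ^ (2 ^ n - 2) + x) :
    ∃ c : F, c ≠ 1 ∧ cdu G c = 4 := by
  have h32 : 2 ^ 5 ≤ 2 ^ n := Nat.pow_le_pow_right (by norm_num) hn
  have h2 : (2 : F) = 0 := by
    have h := FiniteField.cast_card_eq_zero F
    rw [hF] at h
    push_cast at h
    exact pow_eq_zero_iff (by omega) |>.1 h
  have hw := aux_omega n hnodd hF h2
  have hsq : ∀ z : F, ∃ s, s ^ 2 = z := by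
    intro z
    refine ⟨z ^ (2 ^ (n - 1)), ?_⟩
    rw [← pow_mul, ← pow_succ, Nat.sub_add_cancel (by omega), ← hF, FiniteField.pow_card]
  have hG' : ∀ x, G x = x⁻¹ + x := by
    intro x
    rw [hG]
    by_cases hx : x = 0
    · subst hx
      rw [zero_pow (by omega), inv_zero]
    · congr 1
      apply eq_inv_of_mul_eq_one_left
      rw [← pow_succ, show 2 ^ n - 2 + 1 = Fintype.card F - 1 by omega]
      exact FiniteField.pow_card_sub_one_eq_one x hx
  obtain ⟨c, a, b, hc, hab⟩ := aux_exists h2 hw hsq (by omega) G hG'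
  refine ⟨c, hc, le_antisymm ?_ ?_⟩
  · exact Finset.sup_le fun p _ => aux_bound h2 hw G hG' c hc p.1 p.2
  · refine hab.trans ?_
    exact Finset.le_sup (f := fun p : F × F => cddt G c p.1 p.2) (b := (a, b))
      (by simp [hc])
end

section
/- Let n ≥ 4 be an even integer and let G : F_{2^n} → F_{2^n} be given by G(x) = x^{2^n−2} + x^2. Then there exists c ∈ F_{2^n} with c ≠ 1 such that the c-differential uniformity of G satisfies δ_{G,c} = 5. -/
open Finset

lemma quartic_card {F : Type*} [Field F] [Fintype F] [DecidableEq F]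
    (d e f g h : F) (hd : d ≠ 0) :
    (Finset.univ.filter fun x : F => d*x^4+e*x^3+f*x^2+g*x+h = 0).card ≤ 4 := by
  classical
  let P : Polynomial F := Polynomial.C d * Polynomial.X^4 + Polynomial.C e * Polynomial.X^3
    + Polynomial.C f * Polynomial.X^2 + Polynomial.C g * Polynomial.X + Polynomial.C h
  have hdeg : P.natDegree ≤ 4 := by
    simp only [P]; compute_degree
  have hP : P ≠ 0 := by
    intro h0
    have : P.coeff 4 = d := by
      simp [P, Polynomial.coeff_X, Polynomial.coeff_C, Polynomial.coeff_X_pow]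
    rw [h0] at this
    exact hd (by simpa using this.symm)
  calc _ ≤ P.roots.toFinset.card := by
        apply Finset.card_le_card
        intro x hx
        simp only [Finset.mem_filter, Finset.mem_univ, true_and] at hx
        rw [Multiset.mem_toFinset, Polynomial.mem_roots hP]
        simpa [P, Polynomial.IsRoot] using hx
    _ ≤ Multiset.card P.roots := Multiset.toFinset_card_le _
    _ ≤ P.natDegree := Polynomial.card_roots' P
    _ ≤ 4 := hdeg

theorem exists_c_cdu_eq_five_even_square
    {F : Type*} [Field F] [Fintype F] [DecidableEq F]
    (n : ℕ) (hn : 4 ≤ n) (hneven : Even n)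
    (hF : Fintype.card F = 2 ^ n)
    (G : F → F) (hG : ∀ x : F, G x = x ^ (2 ^ n - 2) + x ^ 2) :
    ∃ c : F, c ≠ 1 ∧ cdu G c = 5 := by
  have h16 : 16 ≤ 2 ^ n := by
    calc 16 = 2 ^ 4 := by norm_num
      _ ≤ 2 ^ n := Nat.pow_le_pow_right (by norm_num) hn
  have two : (2 : F) = 0 := by
    have h1 : ((Fintype.card F : ℕ) : F) = 0 := FiniteField.cast_card_eq_zero F
    rw [hF] at h1
    push_cast at h1
    exact pow_eq_zero_iff (by omega) |>.1 h1
  have G0 : G 0 = 0 := by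
    rw [hG, zero_pow (by omega)]; simp
  have Gx : ∀ x : F, x ≠ 0 → x * G x = 1 + x^3 := by
    intro x hx
    have h1 := FiniteField.pow_card_sub_one_eq_one x hx
    rw [hF] at h1
    have h2 : x * x ^ (2^n-2) = 1 := by
      rw [← pow_succ', ← h1]; congr 1; omega
    rw [hG]; linear_combination h2
  -- a primitive cube root of unity
  obtain ⟨w, hw⟩ : ∃ w : F, w^2 + w + 1 = 0 := by
    have hd : 3 ∣ Fintype.card Fˣ := by
      rw [Fintype.card_units, hF]
      obtain ⟨k, rfl⟩ := hneven
      have h4 : 2 ^ (k+k) = 4 ^ k := by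
        rw [← two_mul, pow_mul]; norm_num
      rw [h4]
      simpa using Nat.sub_dvd_pow_sub_pow 4 1 k
    have : Fact (Nat.Prime 3) := ⟨by norm_num⟩
    obtain ⟨u, hu⟩ := exists_prime_orderOf_dvd_card 3 hd
    refine ⟨(u : F), ?_⟩
    have h3 : (u : F)^3 = 1 := by
      have := pow_orderOf_eq_one u
      rw [hu] at this
      have h := congrArg Units.val this
      rwa [Units.val_pow_eq_pow_val, Units.val_one] at h
    have h1 : (u : F) - 1 ≠ 0 := by
      intro h
      have : u = 1 := Units.ext (by simpa using sub_eq_zero.1 h)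
      rw [this] at hu; simp at hu
    apply mul_left_cancel₀ h1
    linear_combination h3
  obtain ⟨c, hc⟩ : ∃ c : F, c^4 + c ≠ 0 := by
    by_contra! H
    have h1 := quartic_card (F := F) 1 0 0 1 0 one_ne_zero
    rw [Finset.filter_true_of_mem (fun x _ => by linear_combination H x),
      Finset.card_univ, hF] at h1
    omega
  have c0 : c ≠ 0 := by rintro rfl; simp at hc
  have c1 : 1 + c ≠ 0 := by
    intro h; apply hc; linear_combination (c^3 - c^2 + c) * h
  have cw : c + w ≠ 0 := by
    intro h; apply hc
    have : c = w := by linear_combination h - w * two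
    rw [this]; linear_combination (w^2 - w) * hw + w * two
  have cw1 : c + w + 1 ≠ 0 := by
    intro h; apply hc
    have : c = w + 1 := by linear_combination h - (w + 1) * two
    rw [this]; linear_combination (w^2 + 3*w + 2) * hw
  obtain ⟨s, hs⟩ : ∃ s : F, (1 + c) * s^2 = c := by
    refine ⟨(c / (1 + c)) ^ (2^(n-1)), ?_⟩
    have h1 := FiniteField.pow_card (c / (1+c))
    rw [hF] at h1
    rw [← pow_mul, ← pow_succ, Nat.sub_add_cancel (by omega), h1]
    field_simp
  refine ⟨c, ?_, ?_⟩
  · rintro rfl; apply c1; linear_combination two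
  have w0 : w ≠ 0 := by rintro rfl; simp at hw
  have w1 : w + 1 ≠ 0 := by
    intro h; have : w^2 = 0 := by linear_combination hw - h
    exact w0 (pow_eq_zero_iff (by norm_num) |>.1 this)
  have s0 : s ≠ 0 := by rintro rfl; apply c0; rw [← hs]; ring
  have s1 : s + 1 ≠ 0 := by
    intro h
    have : (1:F) = 0 := by linear_combination hs - (1+c)*(s - 1) * h
    exact one_ne_zero this
  have sw : s + w ≠ 0 := by
    intro h
    apply mul_ne_zero w0 cw
    linear_combination -hs + (1+c)*(s-w)*h + (1+c)*hw + hw - (1+w+c)*two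
  have sw1 : s + w + 1 ≠ 0 := by
    intro h
    apply mul_ne_zero w1 cw1
    linear_combination -hs + (1+c)*(s-w-1)*h + (1+c)*hw + hw + (w+w*c)*two
  have Gz : ∀ x : F, x^3 = 1 → G x = 0 := by
    intro x hx
    have x0 : x ≠ 0 := by rintro rfl; simp at hx
    apply mul_left_cancel₀ x0
    rw [Gx x x0]; linear_combination hx + two
  -- the equation away from the two special points
  have key : ∀ a b x : F, x ≠ 0 → x + a ≠ 0 → G (x+a) - c * G x = b →
      (1+c)*x^4 + (1+c)*a*x^3 + (b+a^2)*x^2 + (1+c+(b+a^2)*a)*x + c*a = 0 := by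
    intro a b x hx hxa h
    have e1 := Gx x hx
    have e2 := Gx (x+a) hxa
    have : x*(x+a)*b = x*(1+(x+a)^3) - c*(x+a)*(1+x^3) := by
      rw [← h]; linear_combination x*e2 - c*(x+a)*e1
    linear_combination this + (x^4+2*a*x^3+2*a^2*x^2+x+a^3*x)*two
  apply le_antisymm
  · unfold cdu
    apply Finset.sup_le
    rintro ⟨a, b⟩ -
    simp only [cddt]
    by_cases ha : a = 0
    · subst ha
      refine le_trans (Finset.card_le_card ?_) (le_trans (quartic_card (1+c) 0 b (1+c) 0 c1) (by norm_num))
      intro x hx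
      simp only [Finset.mem_filter, Finset.mem_univ, true_and] at hx ⊢
      by_cases hx0 : x = 0
      · subst hx0; ring
      · have := key 0 b x hx0 (by simpa using hx0) (by simpa using hx)
        linear_combination this
    set Q := Finset.univ.filter fun x : F => (1+c)*x^4 + (1+c)*a*x^3 + (b+a^2)*x^2 + (1+c+(b+a^2)*a)*x + c*a = 0 with hQ
    have hQc : Q.card ≤ 4 := quartic_card _ _ _ _ _ c1
    by_cases h0 : G (0+a) - c * G 0 = b
    · by_cases h1 : G (a + a) - c * G a = b
      · have haa : a + a = 0 := by linear_combination a * two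
        rw [haa, G0] at h1
        rw [G0, zero_add] at h0
        have hGa : G a = 0 := by
          apply mul_left_cancel₀ c1
          linear_combination h0 - h1
        have hb : b = 0 := by rw [← h0, hGa]; ring
        have ha3 : a^3 = 1 := by
          have := Gx a ha
          rw [hGa] at this
          linear_combination -this - two
        refine le_trans (Finset.card_le_card (t := {0, a, w*a, (w+1)*a, s*a}) ?_) Finset.card_le_five
        intro x hx
        simp only [Finset.mem_filter, Finset.mem_univ, true_and] at hx
        simp only [Finset.mem_insert, Finset.mem_singleton]
        by_cases hx0 : x = 0
        · exact Or.inl hx0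
        by_cases hxa : x + a = 0
        · right; left; linear_combination hxa - a * two
        right; right
        have e := key a b x hx0 hxa hx
        subst hb
        have : ((x - w*a) * ((x - (w+1)*a))) * (x - s*a)^2 = 0 := by
          apply mul_left_cancel₀ c1
          have p1 : (x - w*a) * (x - (w+1)*a) = x^2 + a*x + a^2 := by
            linear_combination a^2*hw - (a*x*(w+1)+a^2)*two
          have p2 : (1+c) * (x - s*a)^2 = (1+c)*x^2 + c*a^2 := by
            linear_combination a^2*hs - (1+c)*s*a*x*two
          rw [p1, mul_left_comm, p2]
          linear_combination e + (c*x - x + c*a)*ha3 + (c*a^2*x^2 - x)*two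
        rcases mul_eq_zero.1 this with h | h
        · rcases mul_eq_zero.1 h with h | h
          · left; exact sub_eq_zero.1 h
          · right; left; exact sub_eq_zero.1 h
        · right; right; exact sub_eq_zero.1 (pow_eq_zero_iff (by norm_num) |>.1 h)
      · refine le_trans (Finset.card_le_card (t := insert 0 Q) ?_) (le_trans (Finset.card_insert_le _ _) (by omega))
        intro x hx
        simp only [Finset.mem_filter, Finset.mem_univ, true_and] at hx
        by_cases hx0 : x = 0
        · simp [hx0]
        apply Finset.mem_insert_of_mem
        simp only [hQ, Finset.mem_filter, Finset.mem_univ, true_and]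
        refine key a b x hx0 (fun h => h1 ?_) hx
        have : x = a := by linear_combination h - a * two
        rwa [this] at hx
    · refine le_trans (Finset.card_le_card (t := insert a Q) ?_) (le_trans (Finset.card_insert_le _ _) (by omega))
      intro x hx
      simp only [Finset.mem_filter, Finset.mem_univ, true_and] at hx
      by_cases hxa : x + a = 0
      · have : x = a := by linear_combination hxa - a * two
        simp [this]
      apply Finset.mem_insert_of_mem
      simp only [hQ, Finset.mem_filter, Finset.mem_univ, true_and]
      refine key a b x (fun h => h0 ?_) hxa hx
      rwa [h] at hx
  · unfold cdu
    refine le_trans ?_ (Finset.le_sup (f := fun p : F × F => cddt G c p.1 p.2) (b := ((1:F), (0:F))) ?_)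
    swap
    · simp
    simp only [cddt]
    have hcard : ({0, 1, w, w+1, s} : Finset F).card = 5 := by
      have d1 : w ≠ 1 := by
        intro h; apply w1; rw [h]; linear_combination two
      have d2 : s ≠ 1 := by
        intro h; apply s1; rw [h]; linear_combination two
      have d3 : s ≠ w := by
        intro h; apply sw; rw [h]; linear_combination w * two
      have d4 : s ≠ w + 1 := by
        intro h; apply sw1; rw [h]; linear_combination (w + 1) * two
      rw [Finset.card_insert_of_notMem, Finset.card_insert_of_notMem,
        Finset.card_insert_of_notMem, Finset.card_insert_of_notMem, Finset.card_singleton]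
      · simpa using d4.symm
      · simpa using d3.symm
      · simp [d1.symm, d2.symm, w0]
      · simp [w0.symm, w1.symm, s0.symm]
    rw [← hcard]
    apply Finset.card_le_card
    have z1 : G 1 = 0 := Gz 1 (by ring)
    have zw : G w = 0 := Gz w (by linear_combination (w-1)*hw)
    have zw1 : G (w+1) = 0 := Gz (w+1) (by linear_combination (w+2)*hw - two)
    intro x hx
    simp only [Finset.mem_insert, Finset.mem_singleton] at hx
    simp only [Finset.mem_filter, Finset.mem_univ, true_and]
    rcases hx with rfl | rfl | rfl | rfl | rfl
    · simp [G0, z1]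
    · have : (1:F) + 1 = 0 := by linear_combination two
      rw [this, G0, z1]; ring
    · rw [zw, zw1]; ring
    · have : w + 1 + 1 = w := by linear_combination two
      rw [this, zw1, zw]; ring
    · have e1 := Gx x s0
      have e2 := Gx (x+1) s1
      apply mul_left_cancel₀ (mul_ne_zero s0 s1)
      linear_combination x*e2 - c*(x+1)*e1 + (x^2+x+1)*hs + (x^3+x^2+x-c*x^4-c*x^3)*two
end

section
/- Let n ≥ 4 be an even integer and let c ∈ F_{2^n} be a nonzero cube (i.e., c = u^3 for some u ∈ F_{2^n}^*) with c ≠ 1. Let G : F_{2^n} → F_{2^n} be given by G(x) = x^{2^n−2} + x. Then the c-differential uniformity of G satisfies δ_{G,c} = 5. -/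
open Finset

open Finset Polynomial in
lemma cubic_card_le {F : Type*} [Field F] [Fintype F] [DecidableEq F]
    (p q r s : F) (hp : p ≠ 0) :
    (Finset.univ.filter fun x : F => p * x ^ 3 + q * x ^ 2 + r * x + s = 0).card ≤ 3 := by
  set P : F[X] := C p * X ^ 3 + C q * X ^ 2 + C r * X + C s with hP
  have hdeg : P.natDegree = 3 := natDegree_cubic hp
  have hP0 : P ≠ 0 := by
    intro h; rw [h] at hdeg; simp at hdeg
  calc _ ≤ P.roots.toFinset.card := by
        apply Finset.card_le_card
        intro x hx
        simp only [Finset.mem_filter, Finset.mem_univ, true_and] at hx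
        rw [Multiset.mem_toFinset, mem_roots hP0]
        simp [IsRoot, hP, hx]
    _ ≤ P.roots.card := Multiset.toFinset_card_le _
    _ ≤ 3 := hdeg ▸ P.card_roots'

lemma two_eq_zero_of_card {F : Type*} [Field F] [Fintype F] (n : ℕ)
    (hF : Fintype.card F = 2 ^ n) : (2 : F) = 0 := by
  have h := Nat.cast_card_eq_zero F
  rw [hF] at h
  push_cast at h
  exact eq_zero_of_pow_eq_zero h

lemma exists_omega {F : Type*} [Field F] [Fintype F] (n : ℕ) (hneven : Even n)
    (hF : Fintype.card F = 2 ^ n) : ∃ w : F, w ≠ 1 ∧ w ^ 3 = 1 := by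
  classical
  have h3 : 3 ∣ Fintype.card Fˣ := by
    rw [Fintype.card_units, hF]
    obtain ⟨k, rfl⟩ := hneven
    rw [← two_mul, pow_mul]
    simpa using Nat.sub_dvd_pow_sub_pow 4 1 k
  have : Fact (Nat.Prime 3) := ⟨by norm_num⟩
  obtain ⟨w, hw⟩ := exists_prime_orderOf_dvd_card 3 h3
  refine ⟨w, ?_, ?_⟩
  · intro h
    have : w = 1 := by ext; simpa using h
    rw [this] at hw; simp at hw
  · have := pow_orderOf_eq_one w
    rw [hw] at this
    have := congrArg (Units.val) this
    simpa using this

theorem cdu_eq_five_for_cubes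
    {F : Type*} [Field F] [Fintype F] [DecidableEq F]
    (n : ℕ) (hn : 4 ≤ n) (hneven : Even n)
    (hF : Fintype.card F = 2 ^ n)
    (c : F) (hcube : ∃ u : F, u ≠ 0 ∧ c = u ^ 3) (hc : c ≠ 1)
    (G : F → F) (hG : ∀ x : F, G x = x ^ (2 ^ n - 2) + x) :
    cdu G c = 5 := by
  have h2 : (2 : F) = 0 := two_eq_zero_of_card n hF
  have hpow : 2 ^ 4 ≤ 2 ^ n := Nat.pow_le_pow_right (by norm_num) hn
  have hG' : ∀ x : F, G x = x⁻¹ + x := by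
    intro x
    rw [hG]
    congr 1
    by_cases hx : x = 0
    · subst hx
      rw [inv_zero, zero_pow (by omega)]
    · apply eq_inv_of_mul_eq_one_left
      rw [← pow_succ, show 2 ^ n - 2 + 1 = Fintype.card F - 1 by omega]
      exact FiniteField.pow_card_sub_one_eq_one x hx
  apply le_antisymm
  · unfold cdu
    apply Finset.sup_le
    rintro ⟨a, b⟩ -
    simp only [cddt]
    have hsub : (Finset.univ.filter fun x : F => G (x + a) - c * G x = b) ⊆
        ({0, a} : Finset F) ∪ (Finset.univ.filter fun x : F =>
          (1 - c) * x ^ 3 + ((1 - c) * a + a - b) * x ^ 2 +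
            (1 + a ^ 2 - c - a * b) * x + (-(c * a)) = 0) := by
      intro x hx
      simp only [Finset.mem_filter, Finset.mem_univ, true_and, Finset.mem_union,
        Finset.mem_insert, Finset.mem_singleton] at hx ⊢
      by_cases h0 : x = 0
      · exact Or.inl (Or.inl h0)
      by_cases ha : x = a
      · exact Or.inl (Or.inr ha)
      right
      have hxa : x + a ≠ 0 := by
        intro h; apply ha; linear_combination h - a * h2
      rw [hG', hG'] at hx
      field_simp at hx
      linear_combination hx
    calc _ ≤ _ := Finset.card_le_card hsub
      _ ≤ _ := Finset.card_union_le _ _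
      _ ≤ 2 + 3 := Nat.add_le_add Finset.card_le_two
          (cubic_card_le _ _ _ _ (sub_ne_zero.mpr (Ne.symm hc)))
  · obtain ⟨u, hu, rfl⟩ := hcube
    obtain ⟨w, hw1, hw3⟩ := exists_omega n hneven hF
    have hw0 : w ≠ 0 := by rintro rfl; simp at hw3
    have hww : w ^ 2 ≠ 1 := by
      intro h; apply hw1; linear_combination hw3 - w * h
    have key : cddt G (u ^ 3) 1 0 ≤ cdu G (u ^ 3) := by
      unfold cdu
      exact Finset.le_sup (f := fun p : F × F => cddt G (u ^ 3) p.1 p.2)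
        (b := ((1 : F), (0 : F))) (by simp)
    refine le_trans ?_ key
    have ht : ∀ t : F, t ^ 3 = u ^ 3 → 1 + t ≠ 0 := by
      intro t h h'
      apply hc
      rw [← h, show t = 1 by linear_combination h' - h2]
      simp
    have ht0 : ∀ t : F, t ^ 3 = u ^ 3 → t ≠ 0 := by
      rintro t h rfl
      apply pow_ne_zero 3 hu
      rw [← h]; simp
    have hsol : ∀ t : F, t ^ 3 = u ^ 3 →
        G (t / (1 + t) + 1) - u ^ 3 * G (t / (1 + t)) = 0 := by
      intro t h
      have h1 := ht t h
      have h0 := ht0 t h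
      have e : t / (1 + t) + 1 = 1 / (1 + t) := by
        field_simp; linear_combination t * h2
      rw [e, hG', hG', ← h]
      field_simp
      linear_combination (1 + t - t ^ 3 - t ^ 4) * h2
    have hne0 : ∀ t : F, t ^ 3 = u ^ 3 → t / (1 + t) ≠ 0 := fun t h =>
      div_ne_zero (ht0 t h) (ht t h)
    have hne1 : ∀ t : F, t ^ 3 = u ^ 3 → t / (1 + t) ≠ 1 := by
      intro t h h'
      rw [div_eq_one_iff_eq (ht t h)] at h'
      exact one_ne_zero (α := F) (by linear_combination -h')
    have hinj : ∀ t s : F, t ^ 3 = u ^ 3 → s ^ 3 = u ^ 3 → t ≠ s →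
        t / (1 + t) ≠ s / (1 + s) := by
      intro t s h k hts h'
      rw [div_eq_div_iff (ht t h) (ht s k)] at h'
      apply hts; linear_combination h'
    have e1 : (u * w) ^ 3 = u ^ 3 := by rw [mul_pow, hw3, mul_one]
    have e2 : (u * w ^ 2) ^ 3 = u ^ 3 := by
      linear_combination u ^ 3 * (w ^ 3 + 1) * hw3
    have d1 : u ≠ u * w := by
      intro h; apply hw1; apply mul_left_cancel₀ hu; linear_combination -h
    have d2 : u ≠ u * w ^ 2 := by
      intro h; apply hww; apply mul_left_cancel₀ hu; linear_combination -h
    have d3 : u * w ≠ u * w ^ 2 := by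
      intro h; apply hw1; apply mul_left_cancel₀ (mul_ne_zero hu hw0)
      linear_combination -h
    have hcard : ({0, 1, u / (1 + u), (u * w) / (1 + u * w),
        (u * w ^ 2) / (1 + u * w ^ 2)} : Finset F).card = 5 := by
      have i1 := hinj _ _ rfl e1 d1
      have i2 := hinj _ _ rfl e2 d2
      have i3 := hinj _ _ e1 e2 d3
      rw [Finset.card_insert_of_notMem, Finset.card_insert_of_notMem,
        Finset.card_insert_of_notMem, Finset.card_insert_of_notMem, Finset.card_singleton]
      · simpa only [Finset.mem_singleton] using i3
      · simp only [Finset.mem_insert, Finset.mem_singleton, not_or]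
        exact ⟨i1, i2⟩
      · simp only [Finset.mem_insert, Finset.mem_singleton, not_or]
        exact ⟨(hne1 _ rfl).symm, (hne1 _ e1).symm, (hne1 _ e2).symm⟩
      · simp only [Finset.mem_insert, Finset.mem_singleton, not_or]
        exact ⟨zero_ne_one, (hne0 _ rfl).symm, (hne0 _ e1).symm, (hne0 _ e2).symm⟩
    rw [← hcard]
    apply Finset.card_le_card
    intro x hx
    simp only [Finset.mem_insert, Finset.mem_singleton] at hx
    simp only [Finset.mem_filter, Finset.mem_univ, true_and]
    rcases hx with rfl | rfl | rfl | rfl | rfl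
    · rw [hG', hG']; simp; linear_combination h2
    · rw [hG', hG', show (1 : F) + 1 = 0 by linear_combination h2]
      simp; right; linear_combination h2
    · exact hsol _ rfl
    · exact hsol _ e1
    · exact hsol _ e2
end

section
/- Let n ≥ 4 be an even integer and let c ∈ F_{2^n} be a nonzero cube (i.e., c = u^3 for some u ∈ F_{2^n}^*) with c ≠ 1. Then the polynomial x^3 + (c/(c+1))·x^2 + (c/(c+1))·x + c/(c+1) has exactly three distinct roots in F_{2^n}, and none of these roots equals 0 or 1. -/
open Finset

theorem cubic_has_three_roots_for_cubes
    {F : Type*} [Field F] [Fintype F] [DecidableEq F]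
    (n : ℕ) (hn : 4 ≤ n) (hneven : Even n)
    (hF : Fintype.card F = 2 ^ n)
    (c : F) (hcube : ∃ u : F, u ≠ 0 ∧ c = u ^ 3) (hc : c ≠ 1) :
    (Finset.univ.filter fun x : F =>
        x ^ 3 + c / (c + 1) * x ^ 2 + c / (c + 1) * x + c / (c + 1) = 0).card = 3 ∧
    ∀ x : F, x ^ 3 + c / (c + 1) * x ^ 2 + c / (c + 1) * x + c / (c + 1) = 0 →
      x ≠ 0 ∧ x ≠ 1 := by
  obtain ⟨u, hu, hcu⟩ := hcube
  have h2 : (2 : F) = 0 := by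
    have h := Nat.cast_card_eq_zero F
    rw [hF] at h
    push_cast at h
    exact eq_zero_of_pow_eq_zero h
  have hc1 : c + 1 ≠ 0 := fun h => hc (by linear_combination h - h2)
  have hc0 : c ≠ 0 := by rw [hcu]; exact pow_ne_zero 3 hu
  have hdvd : 3 ∣ Fintype.card Fˣ := by
    rw [Fintype.card_units, hF]
    obtain ⟨k, rfl⟩ := hneven
    have := Nat.sub_dvd_pow_sub_pow 4 1 k
    rw [← two_mul, pow_mul]
    simpa using this
  have : Fact (Nat.Prime 3) := ⟨Nat.prime_three⟩
  obtain ⟨g, hg⟩ := exists_prime_orderOf_dvd_card 3 hdvd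
  obtain ⟨w, hw1, hw3⟩ : ∃ w : F, w ≠ 1 ∧ w ^ 3 = 1 := by
    refine ⟨g, ?_, ?_⟩
    · intro h
      have : g = 1 := Units.ext h
      rw [this, orderOf_one] at hg
      omega
    · have := pow_orderOf_eq_one g
      rw [hg] at this
      rw [← Units.val_pow_eq_pow_val, this, Units.val_one]
  have hw : w ^ 2 + w + 1 = 0 := by
    have : (w - 1) * (w ^ 2 + w + 1) = 0 := by linear_combination hw3
    exact (mul_eq_zero.mp this).resolve_left (sub_ne_zero.mpr hw1)
  have hw0 : w ≠ 0 := by rintro rfl; simp at hw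
  have key : ∀ x : F, x ^ 3 + c / (c + 1) * x ^ 2 + c / (c + 1) * x + c / (c + 1) = 0 ↔
      x ^ 3 = c * (x + 1) ^ 3 := by
    intro x
    have e : (c + 1) * (x ^ 3 + c / (c + 1) * x ^ 2 + c / (c + 1) * x + c / (c + 1)) =
      x ^ 3 + c * x ^ 3 + c * x ^ 2 + c * x + c := by field_simp; ring
    constructor
    · intro h
      rw [h, mul_zero] at e
      linear_combination -e - (c * x ^ 3 + 2 * c * x ^ 2 + 2 * c * x + c) * h2
    · intro h
      have : (c + 1) * (x ^ 3 + c / (c + 1) * x ^ 2 + c / (c + 1) * x + c / (c + 1)) = 0 := by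
        rw [e]
        linear_combination h + (c * x ^ 3 + 2 * c * x ^ 2 + 2 * c * x + c) * h2
      exact (mul_eq_zero.mp this).resolve_left hc1
  have hv : ∀ v : F, v ^ 3 = c → v + 1 ≠ 0 := by
    intro v h h'
    have : v = 1 := by linear_combination h' - h2
    subst this
    exact hc (by simpa using h.symm)
  have h1 : u ^ 3 = c := hcu.symm
  have h1w : (w * u) ^ 3 = c := by rw [mul_pow, hw3, h1, one_mul]
  have h1ww : (w * (w * u)) ^ 3 = c := by rw [mul_pow, hw3, h1w, one_mul]
  have inj : ∀ a b : F, a ^ 3 = c → b ^ 3 = c → a ≠ b → a / (a + 1) ≠ b / (b + 1) := by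
    intro a b ha hb hab h
    rw [div_eq_div_iff (hv a ha) (hv b hb)] at h
    exact hab (by linear_combination h)
  have hlin : ∀ x v : F, v ^ 3 = c → (x = v / (v + 1) ↔ x - v * (x + 1) = 0) := by
    intro x v h
    rw [eq_div_iff (hv v h)]
    constructor
    · intro h; linear_combination h - v * x * h2
    · intro h; linear_combination h + v * x * h2
  have ne1 : u ≠ w * u := fun h => hw1 (mul_right_cancel₀ hu (by rw [one_mul]; exact h.symm))
  have ne2 : w * u ≠ w * (w * u) := fun h => ne1 (mul_left_cancel₀ hw0 h)
  have ne3 : u ≠ w * (w * u) := by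
    intro h
    apply ne2
    have := mul_left_cancel₀ hu (show u * 1 = u * (w * w) by linear_combination h)
    exact absurd (show w = 1 by linear_combination w * this + hw3) hw1
  constructor
  · rw [Finset.card_eq_three]
    refine ⟨u / (u + 1), (w * u) / (w * u + 1), (w * (w * u)) / (w * (w * u) + 1),
      inj _ _ h1 h1w ne1, inj _ _ h1 h1ww ne3, inj _ _ h1w h1ww ne2, ?_⟩
    ext x
    simp only [Finset.mem_filter, Finset.mem_univ, true_and, Finset.mem_insert,
      Finset.mem_singleton]
    rw [key, hlin x _ h1, hlin x _ h1w, hlin x _ h1ww, ← mul_eq_zero, ← mul_eq_zero, ← sub_eq_zero]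
    have : x ^ 3 - c * (x + 1) ^ 3 = (x - u * (x + 1)) *
        ((x - w * u * (x + 1)) * (x - w * (w * u) * (x + 1))) := by
      generalize x + 1 = y
      rw [hcu]
      linear_combination (u ^ 3 * y ^ 3) * hw3 + (x ^ 2 * u * y - w * x * u ^ 2 * y ^ 2) * hw
    rw [this]
  · intro x hx
    rw [key] at hx
    constructor
    · rintro rfl
      apply hc0
      linear_combination -hx
    · rintro rfl
      have : (1 : F) = 0 := by linear_combination hx + 4 * c * h2
      exact one_ne_zero this
end

section
/- Let p be a prime, n ≥ 2 and 1 ≤ t < n integers, and suppose the equation a^{p^t+1} = −1 has a solution a ∈ F_{p^n} (for p = 2 this always holds, with a = 1). Then the set {x ∈ F_{p^n} : x^{p^n−2} + x^{p^t} = 0} has exactly 1 + gcd(p^t + 1, p^n − 1) elements. -/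
open Finset

theorem card_roots_inverse_plus_monomial
    {F : Type*} [Field F] [Fintype F] [DecidableEq F]
    (p n t : ℕ) (hp : p.Prime) (hn : 2 ≤ n) (ht1 : 1 ≤ t) (htn : t < n)
    (hF : Fintype.card F = p ^ n)
    (hroot : ∃ a : F, a ^ (p ^ t + 1) = -1) :
    (Finset.univ.filter fun x : F => x ^ (p ^ n - 2) + x ^ p ^ t = 0).card =
      1 + Nat.gcd (p ^ t + 1) (p ^ n - 1) := by
  obtain ⟨a, ha⟩ := hroot
  have ha0 : a ≠ 0 := by
    rintro rfl
    simp at ha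
  have hq : 4 ≤ p ^ n := by
    calc 4 = 2 ^ 2 := by norm_num
      _ ≤ p ^ 2 := Nat.pow_le_pow_left hp.two_le 2
      _ ≤ p ^ n := Nat.pow_le_pow_right hp.pos hn
  have key : ∀ x : F, x ≠ 0 →
      (x ^ (p ^ n - 2) + x ^ p ^ t = 0 ↔ x ^ (p ^ t + 1) = -1) := by
    intro x hx
    have h1 : x ^ (p ^ n - 2) * x = 1 := by
      rw [← pow_succ, show p ^ n - 2 + 1 = p ^ n - 1 by omega, ← hF]
      exact FiniteField.pow_card_sub_one_eq_one x hx
    rw [← mul_left_inj' hx, add_mul, h1, zero_mul, ← pow_succ, add_comm,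
      eq_neg_iff_add_eq_zero]
  have hker : Nat.card (powMonoidHom (p ^ t + 1) : Fˣ →* Fˣ).ker
      = Nat.gcd (p ^ t + 1) (p ^ n - 1) := by
    rw [IsCyclic.card_powMonoidHom_ker, Nat.card_eq_fintype_card, Fintype.card_units, hF,
      Nat.gcd_comm]
  have hset : (Finset.univ.filter fun x : F => x ^ (p ^ n - 2) + x ^ p ^ t = 0) =
      insert 0 ((Finset.univ.filter fun u : Fˣ => u ^ (p ^ t + 1) = 1).image
        fun u : Fˣ => a * (u : F)) := by
    ext x
    simp only [mem_filter, mem_univ, true_and, mem_insert, mem_image]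
    by_cases hx : x = 0
    · subst hx
      have h1 : p ^ n - 2 ≠ 0 := by omega
      have h2 : p ^ t ≠ 0 := (pow_pos hp.pos t).ne'
      simp [zero_pow h1, zero_pow h2]
    · rw [key x hx]
      constructor
      · intro h
        refine Or.inr ⟨Units.mk0 (x / a) (div_ne_zero hx ha0), ?_, ?_⟩
        · apply Units.ext
          simp [div_pow, h, ha]
        · simp only [Units.val_mk0]
          field_simp
      · rintro (h | ⟨u, hu, rfl⟩)
        · exact absurd h hx
        · have : (u : F) ^ (p ^ t + 1) = 1 := by
            rw [← Units.val_pow_eq_pow_val, hu, Units.val_one]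
          rw [mul_pow, ha, this, mul_one]
  rw [hset, card_insert_of_notMem, card_image_of_injective, ← hker, add_comm]
  · congr 1
    rw [Nat.card_eq_fintype_card, ← Fintype.card_subtype]
    exact Fintype.card_congr (Equiv.refl _)
  · intro u v h
    exact Units.ext (mul_left_cancel₀ ha0 h)
  · simp [ha0]
end

section
/- Let p be a prime and n ≥ 1. Let L : F_{p^n} → F_{p^n} be a nonzero linearized polynomial L(x) = Σ_{i=0}^{n−1} a_i x^{p^i} with a_k ≠ 0 and a_i = 0 for all i > k (so deg L = p^k), and let G(x) = x^{p^n−2} + L(x). Then for every c ∈ F_{p^n} with c ≠ 1, every a ∈ F_{p^n} with a ≠ 0, and every b ∈ F_{p^n}, the number of x ∈ F_{p^n} satisfying G(x+a) − c·G(x) = b is at most p^k + 4. In fact, the number of such solutions x with x ∉ {0, −a} is at most p^k + 2. -/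
open Finset

open Polynomial in
theorem LP_degree_aux {F : Type*} [Field F] (p : ℕ) (hp : p.Prime) (A : ℕ → F) (k : ℕ)
    (hak : A k ≠ 0) :
    (∑ i ∈ Finset.range (k+1), C (A i) * X ^ p ^ i : F[X]).degree = ((p ^ k : ℕ) : WithBot ℕ) := by
  rw [Finset.sum_range_succ, Polynomial.degree_add_eq_right_of_degree_lt]
  · exact Polynomial.degree_C_mul_X_pow _ hak
  · rw [Polynomial.degree_C_mul_X_pow _ hak, ← Polynomial.mem_degreeLT]
    refine Submodule.sum_mem _ fun i hi => ?_
    rw [Polynomial.mem_degreeLT]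
    refine (Polynomial.degree_C_mul_X_pow_le _ _).trans_lt ?_
    exact_mod_cast Nat.pow_lt_pow_right hp.one_lt (Finset.mem_range.mp hi)

open Polynomial in
theorem P_degree_aux {F : Type*} [Field F] (M : F[X]) (m : ℕ) (hm : 1 ≤ m)
    (hM : M.degree = (m : WithBot ℕ)) (a d e f : F) (hd : d ≠ 0) :
    (C d * (X * (X + C a)) * M + (C e * (X * (X + C a)) + C d * X - C f)).degree
      = ((m + 2 : ℕ) : WithBot ℕ) := by
  have h1 : (C d * (X * (X + C a)) * M).degree = ((m + 2 : ℕ) : WithBot ℕ) := by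
    rw [degree_mul, degree_mul, degree_mul, hM, degree_C hd, degree_X, degree_X_add_C]
    norm_cast
    omega
  rw [Polynomial.degree_add_eq_left_of_degree_lt, h1]
  rw [h1]
  have h2 : (C e * (X * (X + C a)) + C d * X - C f).degree ≤ ((2 : ℕ) : WithBot ℕ) := by
    push_cast
    compute_degree
  refine h2.trans_lt ?_
  exact_mod_cast (by omega : 2 < m + 2)

theorem cddt_bound_linearized_perturbation
    {F : Type*} [Field F] [Fintype F] [DecidableEq F]
    (p n : ℕ) (hp : p.Prime) (hn : 1 ≤ n)
    (hF : Fintype.card F = p ^ n)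
    (A : ℕ → F) (k : ℕ) (hk : k < n) (hak : A k ≠ 0)
    (hupper : ∀ i, k < i → A i = 0)
    (L : F → F) (hL : ∀ x : F, L x = ∑ i ∈ Finset.range n, A i * x ^ p ^ i)
    (G : F → F) (hG : ∀ x : F, G x = x ^ (p ^ n - 2) + L x) :
    ∀ c : F, c ≠ 1 → ∀ a : F, a ≠ 0 → ∀ b : F,
      (Finset.univ.filter fun x : F => G (x + a) - c * G x = b).card ≤ p ^ k + 4 ∧
      (Finset.univ.filter fun x : F =>
          (G (x + a) - c * G x = b) ∧ x ≠ 0 ∧ x ≠ -a).card ≤ p ^ k + 2 := by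
  intro c hc a ha b
  haveI : Fact p.Prime := ⟨hp⟩
  haveI : CharP F p := charP_of_card_eq_prime_pow hF
  have hadd : ∀ x y, L (x + y) = L x + L y := by
    intro x y
    simp only [hL, add_pow_char_pow, mul_add, Finset.sum_add_distrib]
  have hq : 2 ≤ p ^ n := hp.two_le.trans (Nat.le_self_pow (by omega) p)
  have hinv : ∀ x : F, x ≠ 0 → x * x ^ (p ^ n - 2) = 1 := by
    intro x hx
    rw [← pow_succ', show p ^ n - 2 + 1 = Fintype.card F - 1 by omega]
    exact FiniteField.pow_card_sub_one_eq_one x hx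
  have hL' : ∀ x, L x = ∑ i ∈ Finset.range (k+1), A i * x ^ p ^ i := by
    intro x
    rw [hL]
    symm
    apply Finset.sum_subset
    · intro i hi
      simp only [Finset.mem_range] at *
      omega
    · intro i _ hi
      simp only [Finset.mem_range] at hi
      rw [hupper i (by omega), zero_mul]
  set M : Polynomial F := ∑ i ∈ Finset.range (k+1), Polynomial.C (A i) * Polynomial.X ^ p ^ i with hMdef
  have hMev : ∀ x, M.eval x = L x := by
    intro x
    rw [hL', hMdef, Polynomial.eval_finset_sum]
    simp
  have hdeg := P_degree_aux M (p ^ k) (Nat.one_le_pow _ _ hp.pos) (LP_degree_aux p hp A k hak)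
    a (1 - c) (L a - b) (c * a) (sub_ne_zero.mpr hc.symm)
  set P := (Polynomial.C (1 - c) * (Polynomial.X * (Polynomial.X + Polynomial.C a)) * M +
    (Polynomial.C (L a - b) * (Polynomial.X * (Polynomial.X + Polynomial.C a)) +
      Polynomial.C (1 - c) * Polynomial.X - Polynomial.C (c * a))) with hP
  have hP0 : P ≠ 0 := by
    intro h
    rw [h, Polynomial.degree_zero] at hdeg
    exact absurd hdeg.symm (WithBot.coe_ne_bot)
  have h2 : (Finset.univ.filter fun x : F =>
          (G (x + a) - c * G x = b) ∧ x ≠ 0 ∧ x ≠ -a).card ≤ p ^ k + 2 := by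
    rw [← Polynomial.natDegree_eq_of_degree_eq_some hdeg]
    apply Polynomial.card_le_degree_of_subset_roots
    intro x hx
    have hx' := (Finset.mem_filter.mp (Finset.mem_val.mp hx)).2
    obtain ⟨hx1, hx0, hxa⟩ := hx'
    rw [Polynomial.mem_roots hP0, Polynomial.IsRoot, hP]
    simp only [Polynomial.eval_add, Polynomial.eval_sub, Polynomial.eval_mul, Polynomial.eval_C,
      Polynomial.eval_X, hMev]
    have e1 := hinv x hx0
    have e2 := hinv (x + a) (fun h => hxa (eq_neg_of_add_eq_zero_left h))
    rw [hG, hG, hadd] at hx1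
    linear_combination x * (x + a) * hx1 - x * e2 + c * (x + a) * e1
  refine ⟨?_, h2⟩
  have hsub : (Finset.univ.filter fun x : F => G (x + a) - c * G x = b) ⊆
      (Finset.univ.filter fun x : F =>
          (G (x + a) - c * G x = b) ∧ x ≠ 0 ∧ x ≠ -a) ∪ {0, -a} := by
    intro x hx
    simp only [Finset.mem_filter, Finset.mem_univ, true_and, Finset.mem_union,
      Finset.mem_insert, Finset.mem_singleton] at *
    tauto
  have h3 := (Finset.card_le_card hsub).trans (Finset.card_union_le _ _)
  have h4 : ({0, -a} : Finset F).card ≤ 2 := Finset.card_le_two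
  omega
end

section
/- Let n ≥ 1 and let a, b ∈ F_{2^n} with b ≠ 0. Then the equation x^3 + a·x + b = 0 has exactly one solution x ∈ F_{2^n} if and only if Tr(a^3/b^2) ≠ Tr(1), where Tr(1) = n mod 2. -/
open Finset

/-- The absolute trace of `F_{2^n}`, `Tr x = ∑_{i=0}^{n-1} x^{2^i}`,
viewed as an element of the field (its values lie in the prime subfield). -/
def Tr {F : Type*} [Field F] (n : ℕ) (x : F) : F :=
  ∑ i ∈ Finset.range n, x ^ 2 ^ i

theorem Tr_add {F : Type*} [Field F] [CharP F 2] (n : ℕ) (x y : F) :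
    Tr n (x + y) = Tr n x + Tr n y := by
  unfold Tr
  rw [← Finset.sum_add_distrib]
  exact Finset.sum_congr rfl fun i _ => add_pow_char_pow x y 2 i

theorem Tr_sq {F : Type*} [Field F] (n : ℕ) (x : F) (hx : x ^ 2 ^ n = x) :
    Tr n (x ^ 2) = Tr n x := by
  unfold Tr
  have h1 : ∀ i, (x ^ 2) ^ 2 ^ i = x ^ 2 ^ (i + 1) := fun i => by
    rw [← pow_mul, pow_succ' 2 i]
  have h2 := Finset.sum_range_succ (fun i => x ^ 2 ^ i) n
  have h3 := Finset.sum_range_succ' (fun i => x ^ 2 ^ i) n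
  rw [h2] at h3
  simp only [h1]
  simp only [hx, pow_zero, pow_one] at h3
  exact (add_right_cancel h3).symm

theorem Tr_AS {F : Type*} [Field F] [CharP F 2] (n : ℕ) (x : F) (hx : x ^ 2 ^ n = x) :
    Tr n (x ^ 2 + x) = 0 := by
  rw [Tr_add, Tr_sq n x hx, CharTwo.add_self_eq_zero]

theorem exists_AS {F : Type*} [Field F] [Fintype F] [DecidableEq F] [CharP F 2]
    (n : ℕ) (hn : 1 ≤ n) (hF : Fintype.card F = 2 ^ n) (c : F) (hc : Tr n c = 0) :
    ∃ y : F, y ^ 2 + y = c := by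
  classical
  obtain ⟨m, rfl⟩ : ∃ m, n = m + 1 := ⟨n - 1, by omega⟩
  let p : Polynomial F := ∑ i ∈ Finset.range (m + 1), Polynomial.X ^ 2 ^ i
  have hev : ∀ x, p.eval x = Tr (m + 1) x := fun x => by
    simp [p, Tr, Polynomial.eval_finsetSum]
  have hdeg : p.natDegree ≤ 2 ^ m := by
    refine Polynomial.natDegree_sum_le_of_forall_le _ _ fun i hi => ?_
    rw [Polynomial.natDegree_X_pow]
    exact Nat.pow_le_pow_right (by norm_num) (by simp at hi; omega)
  have hp0 : p ≠ 0 := by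
    intro h
    have : p.coeff (2 ^ m) = 1 := by
      simp only [p, Polynomial.finsetSum_coeff, Polynomial.coeff_X_pow]
      rw [Finset.sum_eq_single m]
      · simp
      · intro b _ hb
        rw [if_neg]
        intro h
        exact hb (Nat.pow_right_injective le_rfl h).symm
      · simp
    rw [h] at this
    simp at this
  let I : Finset F := Finset.univ.image fun y : F => y ^ 2 + y
  have hI : 2 ^ m ≤ I.card := by
    have := Finset.card_le_mul_card_image (f := fun y : F => y ^ 2 + y) (Finset.univ : Finset F) 2
      (by
        intro b hb
        obtain ⟨y, -, rfl⟩ := Finset.mem_image.1 hb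
        refine (Finset.card_le_card (t := {y, y + 1}) ?_).trans Finset.card_le_two
        intro z hz
        simp only [Finset.mem_filter, Finset.mem_univ, true_and] at hz
        have h2 : (2 : F) = 0 := CharTwo.two_eq_zero
        have : (z - y) * (z - (y + 1)) = 0 := by
          linear_combination hz + (y ^ 2 + y - z * y - z) * h2
        rcases mul_eq_zero.1 this with h | h
        · simp [sub_eq_zero.1 h]
        · simp [sub_eq_zero.1 h])
    rw [Finset.card_univ, hF, pow_succ'] at this
    exact Nat.le_of_mul_le_mul_left this (by norm_num)
  have hsub : I ⊆ p.roots.toFinset := by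
    intro z hz
    obtain ⟨y, -, rfl⟩ := Finset.mem_image.1 hz
    rw [Multiset.mem_toFinset, Polynomial.mem_roots hp0, Polynomial.IsRoot, hev]
    exact Tr_AS _ _ (hF ▸ FiniteField.pow_card y)
  have heq := Finset.eq_of_subset_of_card_le hsub
    (((Multiset.toFinset_card_le _).trans (p.card_roots'.trans hdeg)).trans hI)
  have : c ∈ I := by
    rw [heq, Multiset.mem_toFinset, Polynomial.mem_roots hp0, Polynomial.IsRoot, hev, hc]
  obtain ⟨y, -, h⟩ := Finset.mem_image.1 this
  exact ⟨y, h⟩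

theorem root_iff {F : Type*} [Field F] [Fintype F] [DecidableEq F] [CharP F 2]
    (n : ℕ) (hn : 1 ≤ n) (hF : Fintype.card F = 2 ^ n) (a b r : F) (hb : b ≠ 0)
    (hr : r ^ 3 + a * r + b = 0) :
    (∃ s, s ≠ r ∧ s ^ 3 + a * s + b = 0) ↔ Tr n (a ^ 3 / b ^ 2) = Tr n 1 := by
  have h2 : (2 : F) = 0 := CharTwo.two_eq_zero
  have hr0 : r ≠ 0 := by
    rintro rfl
    apply hb
    simpa using hr
  obtain ⟨u, rfl⟩ : ∃ u, a = u * r ^ 2 := ⟨a / r ^ 2, by field_simp⟩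
  obtain rfl : b = (1 + u) * r ^ 3 := by
    linear_combination hr - (1 + u) * r ^ 3 * h2
  have hu : 1 + u ≠ 0 := left_ne_zero_of_mul hb
  have key : (u * r ^ 2) ^ 3 / ((1 + u) * r ^ 3) ^ 2
      = u + (((1 + u)⁻¹) ^ 2 + (1 + u)⁻¹) := by
    field_simp
    linear_combination (-1 - u - u ^ 2) * h2
  have hfix : ∀ x : F, x ^ 2 ^ n = x := fun x => hF ▸ FiniteField.pow_card x
  rw [key, Tr_add, Tr_AS _ _ (hfix _), add_zero]
  have htr : Tr n u = Tr n 1 ↔ Tr n (1 + u) = 0 := by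
    rw [Tr_add, CharTwo.add_eq_zero, eq_comm]
  rw [htr]
  constructor
  · rintro ⟨s, hs, h⟩
    obtain ⟨y, rfl⟩ : ∃ y, s = y * r := ⟨s / r, by field_simp⟩
    have hy : y - 1 ≠ 0 := by
      intro h
      apply hs
      rw [sub_eq_zero.1 h, one_mul]
    have : y ^ 2 + y = 1 + u := by
      have : ((y - 1) * r ^ 3) * (y ^ 2 + y - (1 + u)) = 0 := by
        linear_combination h - r ^ 3 * y * (1 + u) * h2
      rcases mul_eq_zero.1 this with h | h
      · exact absurd h (mul_ne_zero hy (pow_ne_zero _ hr0))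
      · exact sub_eq_zero.1 h
    rw [← this]
    exact Tr_AS _ _ (hfix _)
  · intro h
    obtain ⟨y, hy⟩ := exists_AS n hn hF _ h
    refine ⟨y * r, ?_, ?_⟩
    · intro h
      have h1 : y = 1 := by
        have := mul_right_cancel₀ hr0 (h.trans (one_mul r).symm)
        exact this
      apply hu
      rw [← hy, h1]
      linear_combination h2
    · linear_combination ((y - 1) * r ^ 3) * hy + r ^ 3 * y * (1 + u) * h2

theorem Tr_three {F : Type*} [Field F] [CharP F 2] (n : ℕ) (x : F) (hx : x ^ 2 ^ n = x) :
    Tr (n + n + n) x = Tr n x := by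
  have h : ∀ i, x ^ 2 ^ (n + i) = x ^ 2 ^ i := fun i => by
    rw [pow_add, pow_mul, hx]
  unfold Tr
  rw [Finset.sum_range_add, Finset.sum_range_add]
  simp only [add_assoc, h]
  rw [CharTwo.add_self_eq_zero, add_zero]

theorem noroot {F : Type*} [Field F] [Fintype F] [DecidableEq F] [CharP F 2]
    (n : ℕ) (hn : 1 ≤ n) (hF : Fintype.card F = 2 ^ n) (a b : F) (hb : b ≠ 0)
    (hr : ∀ r : F, r ^ 3 + a * r + b ≠ 0) :
    Tr n (a ^ 3 / b ^ 2) = Tr n 1 := by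
  classical
  let f : Polynomial F := Polynomial.X ^ 3 + Polynomial.C a * Polynomial.X + Polynomial.C b
  have hd : f.natDegree = 3 := by simp only [f]; compute_degree!
  have hirr : Irreducible f := by
    apply Polynomial.irreducible_of_degree_le_three_of_not_isRoot
    · rw [hd]; decide
    · intro x hx
      apply hr x
      simpa [f, Polynomial.IsRoot] using hx
  have hfact : Fact (Irreducible f) := ⟨hirr⟩
  let K := AdjoinRoot f
  let pb := AdjoinRoot.powerBasis hirr.ne_zero
  have hfin : Module.Finite F K := pb.finite
  have hfK : Finite K := Module.finite_of_finite F
  have hK : Fintype K := Fintype.ofFinite K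
  have hcard : Fintype.card K = 2 ^ (n + n + n) := by
    rw [Module.card_eq_pow_finrank (K := F), hF, pb.finrank, AdjoinRoot.powerBasis_dim, hd,
      ← pow_mul]
    congr 1; ring
  have hch : CharP K 2 := charP_of_injective_algebraMap (algebraMap F K).injective 2
  let r : K := AdjoinRoot.root f
  let ι := algebraMap F K
  have hroot : r ^ 3 + ι a * r + ι b = 0 := by
    have := AdjoinRoot.eval₂_root f
    simp only [f, Polynomial.eval₂_add, Polynomial.eval₂_mul, Polynomial.eval₂_pow,
      Polynomial.eval₂_X, Polynomial.eval₂_C] at this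
    exact this
  have hfix : ∀ x : F, x ^ 2 ^ n = x := fun x => hF ▸ FiniteField.pow_card x
  have hne : r ^ 2 ^ n ≠ r := by
    intro h
    let g : Polynomial K := Polynomial.X ^ 2 ^ n - Polynomial.X
    have h1 : 1 < 2 ^ n := Nat.one_lt_two_pow (by omega)
    have hg0 : g ≠ 0 := FiniteField.X_pow_card_sub_X_ne_zero K h1
    have hgd : g.natDegree = 2 ^ n := FiniteField.X_pow_card_sub_X_natDegree_eq K h1
    let I : Finset K := Finset.univ.image ι
    have hI : I.card = 2 ^ n := by
      rw [Finset.card_image_of_injective _ ι.injective, Finset.card_univ, hF]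
    have hsub : I ⊆ g.roots.toFinset := by
      intro z hz
      obtain ⟨y, -, rfl⟩ := Finset.mem_image.1 hz
      rw [Multiset.mem_toFinset, Polynomial.mem_roots hg0]
      simp [g, ← map_pow, hfix]
    have heq := Finset.eq_of_subset_of_card_le hsub
      ((Multiset.toFinset_card_le _).trans (g.card_roots'.trans (by rw [hgd, hI])))
    have : r ∈ I := by
      rw [heq, Multiset.mem_toFinset, Polynomial.mem_roots hg0]
      simp [g, h]
    obtain ⟨y, -, hy⟩ := Finset.mem_image.1 this
    apply hr y
    apply ι.injective
    rw [map_add, map_add, map_mul, map_pow, hy, hroot, map_zero]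
  have hroot2 : (r ^ 2 ^ n) ^ 3 + ι a * r ^ 2 ^ n + ι b = 0 := by
    have h := congrArg (fun z => z ^ 2 ^ n) hroot
    simp only [add_pow_char_pow, mul_pow, ← map_pow, hfix] at h
    rw [zero_pow (by positivity)] at h
    rw [← h]; ring
  have hfin := (root_iff (n + n + n) (by omega) hcard (ι a) (ι b) r
    (by simpa using hb) hroot).1 ⟨_, hne, hroot2⟩
  have hιT : ∀ x : F, Tr (n + n + n) (ι x) = ι (Tr n x) := fun x => by
    rw [Tr_three n (ι x) (by rw [← map_pow, hfix])]
    simp [Tr, map_sum]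
  rw [← map_pow, ← map_pow, ← map_div₀, ← map_one ι, hιT, hιT] at hfin
  exact ι.injective hfin

theorem cubic_unique_solution_iff
    {F : Type*} [Field F] [Fintype F] [DecidableEq F]
    (n : ℕ) (hn : 1 ≤ n) (hF : Fintype.card F = 2 ^ n)
    (a b : F) (hb : b ≠ 0) :
    (Finset.univ.filter fun x : F => x ^ 3 + a * x + b = 0).card = 1 ↔
      Tr n (a ^ 3 / b ^ 2) ≠ Tr n 1 := by
  have : CharP F 2 := charP_of_card_eq_prime_pow hF
  by_cases h : ∃ r : F, r ^ 3 + a * r + b = 0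
  · obtain ⟨r, hr⟩ := h
    rw [ne_eq, ← root_iff n hn hF a b r hb hr, Finset.card_eq_one]
    constructor
    · rintro ⟨t, ht⟩ ⟨s, hs, hs'⟩
      have h1 : r ∈ ({t} : Finset F) := by rw [← ht]; simpa using hr
      have h2 : s ∈ ({t} : Finset F) := by rw [← ht]; simpa using hs'
      rw [Finset.mem_singleton] at h1 h2
      exact hs (h2.trans h1.symm)
    · intro h
      refine ⟨r, ?_⟩
      ext s
      simp only [Finset.mem_filter, Finset.mem_univ, true_and, Finset.mem_singleton]
      constructor
      · intro hs
        by_contra hne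
        exact h ⟨s, hne, hs⟩
      · rintro rfl
        exact hr
  · push Not at h
    have := noroot n hn hF a b hb h
    simp [this, h]
end

section
/- Let n ≥ 2 be an even integer and let a, b ∈ F_{2^n} with b ≠ 0. Then the equation x^3 + a·x + b = 0 has exactly three solutions x ∈ F_{2^n} if and only if Tr(a^3/b^2) = 0 and the two roots t_1, t_2 ∈ F_{2^n} of t^2 + b·t + a^3 = 0 (which exist in F_{2^n} when Tr(a^3/b^2) = 0) are both cubes in F_{2^n}. -/
open Finset

lemma aux_charTwo {F : Type*} [Field F] [Fintype F] (n : ℕ) (hn : 2 ≤ n)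
    (hF : Fintype.card F = 2 ^ n) : CharP F 2 := by
  obtain ⟨p, hp⟩ := CharP.exists F
  obtain ⟨m, hpp, hc⟩ := FiniteField.card F p
  rw [hF] at hc
  have h1 : p ∣ 2 ^ n := by rw [hc]; exact dvd_pow_self p m.pos.ne'
  have h2 := (Nat.prime_dvd_prime_iff_eq hpp Nat.prime_two).1 (hpp.dvd_of_dvd_pow h1)
  rwa [h2] at hp

lemma aux_omega_s15 {F : Type*} [Field F] [Fintype F] (n : ℕ) (hneven : Even n)
    (hF : Fintype.card F = 2 ^ n) : ∃ w : F, w ^ 2 + w + 1 = 0 := by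
  classical
  have h3 : 3 ∣ Fintype.card Fˣ := by
    rw [Fintype.card_units, hF]
    obtain ⟨k, rfl⟩ := hneven
    have := Nat.sub_dvd_pow_sub_pow 4 1 k
    rw [← two_mul, pow_mul]
    simpa using this
  haveI : Fact (Nat.Prime 3) := ⟨Nat.prime_three⟩
  obtain ⟨u, hu⟩ := exists_prime_orderOf_dvd_card 3 h3
  have h1 : (u : F) ^ 3 = 1 := by
    have := pow_orderOf_eq_one u
    rw [hu] at this
    simpa using congrArg Units.val this
  have h2 : (u : F) ≠ 1 := by
    intro h
    have : u = 1 := Units.ext h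
    rw [this, orderOf_one] at hu
    omega
  refine ⟨u, ?_⟩
  have : ((u : F) - 1) * ((u : F) ^ 2 + u + 1) = 0 := by linear_combination h1
  exact (mul_eq_zero.1 this).resolve_left (sub_ne_zero.2 h2)

lemma aux_tr_AS {F : Type*} [Field F] [Fintype F] [CharP F 2] (n : ℕ)
    (hF : Fintype.card F = 2 ^ n) (y : F) : Tr n (y ^ 2 + y) = 0 := by
  have h : ∀ m : ℕ, Tr m (y ^ 2 + y) = y ^ 2 ^ m - y := by
    intro m
    induction m with
    | zero => simp [Tr]
    | succ m ih =>
      unfold Tr at ih ⊢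
      rw [Finset.sum_range_succ, ih, add_pow_char_pow, ← pow_mul, ← pow_succ']
      linear_combination y ^ 2 ^ m * CharTwo.two_eq_zero (R := F)
  rw [h, ← hF, FiniteField.pow_card, sub_self]

open Polynomial in
lemma aux_tr_zero {F : Type*} [Field F] [Fintype F] [DecidableEq F] [CharP F 2] (n : ℕ)
    (hn : 2 ≤ n) (hF : Fintype.card F = 2 ^ n) (c : F) (hc : Tr n c = 0) :
    ∃ y : F, y ^ 2 + y = c := by
  have h2 := CharTwo.two_eq_zero (R := F)
  obtain ⟨m, rfl⟩ : ∃ m, n = m + 1 := ⟨n - 1, by omega⟩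
  set P : F[X] := ∑ i ∈ Finset.range (m + 1), X ^ 2 ^ i with hP
  have hdeg : ∀ k : ℕ, (∑ i ∈ Finset.range (k + 1), (X : F[X]) ^ 2 ^ i).natDegree ≤ 2 ^ k := by
    intro k
    refine natDegree_sum_le_of_forall_le _ _ ?_
    intro i hi
    rw [natDegree_X_pow]
    exact Nat.pow_le_pow_right (by norm_num) (by simp at hi; omega)
  have hP0 : P ≠ 0 := by
    intro h
    have h1 : P.coeff 1 = 1 := by
      rw [hP, finsetSum_coeff, Finset.sum_eq_single 0]
      · simp
      · intro i _ hi
        rw [coeff_X_pow, if_neg]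
        exact (Nat.one_lt_two_pow hi).ne
      · simp
    rw [h] at h1
    simp at h1
  have hcard : (Finset.univ.filter fun x : F => Tr (m + 1) x = 0).card ≤ 2 ^ m := by
    refine le_trans ?_ (hdeg m)
    refine le_trans (Finset.card_le_card ?_) (le_trans (Multiset.toFinset_card_le P.roots) (card_roots' P))
    intro x hx
    simp only [Finset.mem_filter, Finset.mem_univ, true_and] at hx
    rw [Multiset.mem_toFinset, mem_roots hP0, IsRoot.def, hP, eval_finsetSum]
    simpa [Tr] using hx
  have himg : 2 ^ m ≤ (Finset.univ.image fun y : F => y ^ 2 + y).card := by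
    have := Finset.card_le_mul_card_image (f := fun y : F => y ^ 2 + y) Finset.univ 2 (by
      intro d hd
      obtain ⟨y, -, rfl⟩ := Finset.mem_image.1 hd
      refine le_trans (Finset.card_le_card (t := {y, y + 1}) ?_) Finset.card_le_two
      intro x hx
      simp only [Finset.mem_filter, Finset.mem_univ, true_and] at hx
      have h : (x - y) * (x - (y + 1)) = 0 := by
        linear_combination hx + (y ^ 2 + y - x * y - x) * h2
      rcases mul_eq_zero.1 h with h | h
      · simp [sub_eq_zero.1 h]
      · simp [sub_eq_zero.1 h])
    rw [Finset.card_univ, hF, pow_succ] at this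
    omega
  have hsub : (Finset.univ.image fun y : F => y ^ 2 + y) ⊆
      (Finset.univ.filter fun x : F => Tr (m + 1) x = 0) := by
    intro d hd
    obtain ⟨y, -, rfl⟩ := Finset.mem_image.1 hd
    simpa using aux_tr_AS (m + 1) hF y
  have heq := Finset.eq_of_subset_of_card_le hsub (hcard.trans himg)
  have hmem : c ∈ (Finset.univ.filter fun x : F => Tr (m + 1) x = 0) := by simpa using hc
  rw [← heq] at hmem
  obtain ⟨y, -, hy⟩ := Finset.mem_image.1 hmem
  exact ⟨y, hy⟩

theorem cubic_three_solutions_iff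
    {F : Type*} [Field F] [Fintype F] [DecidableEq F]
    (n : ℕ) (hn : 2 ≤ n) (hneven : Even n)
    (hF : Fintype.card F = 2 ^ n)
    (a b : F) (hb : b ≠ 0) :
    (Finset.univ.filter fun x : F => x ^ 3 + a * x + b = 0).card = 3 ↔
      (Tr n (a ^ 3 / b ^ 2) = 0 ∧
        ∀ t : F, t ^ 2 + b * t + a ^ 3 = 0 → ∃ z : F, z ^ 3 = t) := by
  haveI := aux_charTwo n hn hF
  have h2 := CharTwo.two_eq_zero (R := F)
  obtain ⟨w, hw⟩ := aux_omega_s15 n hneven hF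
  constructor
  · intro h
    obtain ⟨x, y, z, hxy, hxz, hyz, hS⟩ := Finset.card_eq_three.1 h
    have hroot : ∀ r ∈ ({x, y, z} : Finset F), r ^ 3 + a * r + b = 0 := by
      intro r hr
      rw [← hS] at hr
      simpa using hr
    have hx := hroot x (by simp)
    have hy := hroot y (by simp)
    have hz := hroot z (by simp)
    have e1 : x ^ 2 + x * y + y ^ 2 + a = 0 := by
      apply mul_left_cancel₀ (sub_ne_zero.2 hxy)
      linear_combination hx - hy
    have e2 : x ^ 2 + x * z + z ^ 2 + a = 0 := by
      apply mul_left_cancel₀ (sub_ne_zero.2 hxz)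
      linear_combination hx - hz
    have e3 : x + y + z = 0 := by
      apply mul_left_cancel₀ (sub_ne_zero.2 hyz)
      linear_combination e1 - e2
    obtain rfl : z = -x - y := by linear_combination e3
    obtain rfl : a = -(x ^ 2 + x * y + y ^ 2) := by linear_combination e1
    obtain rfl : b = x ^ 2 * y + x * y ^ 2 := by linear_combination hx
    obtain ⟨u, hu⟩ : ∃ u, u = x + w * y + w ^ 2 * (x + y) := ⟨_, rfl⟩
    obtain ⟨v, hv⟩ : ∃ v, v = x + w ^ 2 * y + w * (x + y) := ⟨_, rfl⟩
    have hw' : w ^ 2 = w + 1 := by linear_combination hw - (w + 1) * h2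
    have hu' : u = w * x + y := by
      rw [hu, hw']; linear_combination (x + w * y) * h2
    have hv' : v = w * x + x + y := by
      rw [hv, hw']; linear_combination (w * y) * h2
    have huv : u * v = -(x ^ 2 + x * y + y ^ 2) := by
      rw [hu', hv']
      grind
    have hs : u ^ 3 + v ^ 3 = x ^ 2 * y + x * y ^ 2 := by
      rw [hu', hv']
      grind
    generalize x ^ 2 * y + x * y ^ 2 = b at *
    generalize -(x ^ 2 + x * y + y ^ 2) = a at *
    constructor
    · have : a ^ 3 / b ^ 2 = (u ^ 3 / b) ^ 2 + u ^ 3 / b := by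
        field_simp
        rw [← huv, ← hs]
        linear_combination (-u ^ 6) * h2
      rw [this]
      exact aux_tr_AS n hF _
    · intro t ht
      have : (t - u ^ 3) * (t - v ^ 3) = 0 := by
        rw [← huv, ← hs] at ht
        linear_combination ht - (t * (u ^ 3 + v ^ 3)) * h2
      rcases mul_eq_zero.1 this with h | h
      · exact ⟨u, (sub_eq_zero.1 h).symm⟩
      · exact ⟨v, (sub_eq_zero.1 h).symm⟩
  · rintro ⟨htr, hcube⟩
    obtain ⟨u, v, huv, hs⟩ : ∃ u v : F, u * v = a ∧ u ^ 3 + v ^ 3 = b := by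
      by_cases ha : a = 0
      · subst ha
        obtain ⟨z, hz⟩ := hcube b (by linear_combination b ^ 2 * h2)
        exact ⟨z, 0, by simp, by simpa using hz⟩
      · obtain ⟨y, hy⟩ := aux_tr_zero n hn hF _ htr
        have hy' : b ^ 2 * (y ^ 2 + y) = a ^ 3 := by rw [hy]; field_simp
        have ht : (b * y) ^ 2 + b * (b * y) + a ^ 3 = 0 := by
          linear_combination hy' + a ^ 3 * h2
        obtain ⟨z, hz⟩ := hcube _ ht
        have hz0 : z ≠ 0 := by
          rintro rfl
          apply ha
          have h0 : b * y = 0 := by rw [← hz]; ring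
          rw [h0] at ht
          simpa using ht
        refine ⟨z, a / z, by field_simp, ?_⟩
        apply mul_left_cancel₀ (pow_ne_zero 3 hz0)
        have : z ^ 3 * (z ^ 3 + (a / z) ^ 3) = (z ^ 3) ^ 2 + a ^ 3 := by field_simp
        rw [this, hz]
        linear_combination ht - b ^ 2 * y * h2
    have hw3 : w ^ 3 = 1 := by linear_combination (w - 1) * hw
    have hw0 : w ≠ 0 := by rintro rfl; simp at hw
    have hne : ∀ k : F, k ^ 3 = 1 → u + k * v ≠ 0 := by
      intro k hk h
      apply hb
      have h' : u = -(k * v) := by linear_combination h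
      rw [← hs, h']
      linear_combination (-v ^ 3) * hk
    have hS : (Finset.univ.filter fun x : F => x ^ 3 + a * x + b = 0) =
        {u + v, w * u + w ^ 2 * v, w ^ 2 * u + w * v} := by
      ext x
      simp only [Finset.mem_filter, Finset.mem_univ, true_and, Finset.mem_insert,
        Finset.mem_singleton]
      have key : x ^ 3 + a * x + b =
          (x - (u + v)) * ((x - (w * u + w ^ 2 * v)) * (x - (w ^ 2 * u + w * v))) := by
        rw [← huv, ← hs]
        grind
      rw [key, mul_eq_zero, mul_eq_zero, sub_eq_zero, sub_eq_zero, sub_eq_zero]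
    rw [hS, Finset.card_eq_three]
    have hw6 : (w ^ 2) ^ 3 = 1 := by rw [← pow_mul, mul_comm, pow_mul, hw3, one_pow]
    refine ⟨_, _, _, ?_, ?_, ?_, rfl⟩
    · intro h
      apply hne (w ^ 2) hw6
      apply mul_left_cancel₀ (pow_ne_zero 2 hw0)
      grind
    · intro h
      apply hne w hw3
      apply mul_left_cancel₀ hw0
      grind
    · intro h
      apply hne 1 (by simp)
      grind
end

section
/- Let t and n be integers with 1 ≤ t ≤ n. Then gcd(2^t + 1, 2^n − 1) = (2^{gcd(2t,n)} − 1)/(2^{gcd(t,n)} − 1). -/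
theorem gcd_two_pow_add_one
    (t n : ℕ) (ht : 1 ≤ t) (htn : t ≤ n) :
    Nat.gcd (2 ^ t + 1) (2 ^ n - 1) =
      (2 ^ Nat.gcd (2 * t) n - 1) / (2 ^ Nat.gcd t n - 1) := by
  have hfac : 2 ^ (2 * t) - 1 = (2 ^ t - 1) * (2 ^ t + 1) := by
    have h := Nat.sq_sub_sq (2 ^ t) 1
    rw [mul_comm 2 t, pow_mul, mul_comm (2 ^ t - 1)]
    simpa using h
  have hcop : Nat.Coprime (2 ^ t - 1) (2 ^ t + 1) := by
    obtain ⟨s, rfl⟩ : ∃ s, t = s + 1 := ⟨t - 1, by omega⟩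
    have h1 : 1 ≤ 2 ^ s := Nat.one_le_two_pow
    have hodd : Odd (2 ^ (s + 1) - 1) := ⟨2 ^ s - 1, by rw [pow_succ]; omega⟩
    have he : 2 ^ (s + 1) + 1 = 2 + (2 ^ (s + 1) - 1) := by rw [pow_succ]; omega
    rw [he, Nat.coprime_add_self_right]
    exact hodd.coprime_two_right
  have hpos : 0 < 2 ^ Nat.gcd t n - 1 := by
    have := Nat.one_lt_two_pow (Nat.gcd_pos_of_pos_left n ht).ne'
    omega
  symm
  apply Nat.div_eq_of_eq_mul_right hpos
  rw [← Nat.pow_sub_one_gcd_pow_sub_one, ← Nat.pow_sub_one_gcd_pow_sub_one, hfac,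
    Nat.gcd_comm, hcop.gcd_mul, Nat.gcd_comm (2 ^ t - 1), Nat.gcd_comm (2 ^ t + 1)]
end

section
/- Let p be an odd prime and let t, n be integers with 1 ≤ t ≤ n. If n/gcd(n,t) is odd, then gcd(p^t + 1, p^n − 1) = 2; if n/gcd(n,t) is even, then gcd(p^t + 1, p^n − 1) = p^{gcd(t,n)} + 1. -/
theorem gcd_aux (q s m : ℕ) (hq : Odd q) (hm : 0 < m) (hs : Nat.Coprime s m) :
    (Odd m → Nat.gcd (q ^ s + 1) (q ^ m - 1) = 2) ∧
    (Even m → Nat.gcd (q ^ s + 1) (q ^ m - 1) = q + 1) := by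
  have hq1 : 1 ≤ q := hq.pos
  have h1 : ∀ k, 1 ≤ q ^ k := fun k => Nat.one_le_pow _ _ hq1
  have key : ∀ k D, D ∣ q ^ k - 1 ↔ 1 ≡ q ^ k [MOD D] :=
    fun k D => (Nat.modEq_iff_dvd' (h1 k)).symm
  set D := Nat.gcd (q ^ s + 1) (q ^ m - 1) with hD
  have hDs : D ∣ q ^ s + 1 := Nat.gcd_dvd_left _ _
  have hDm : D ∣ q ^ m - 1 := Nat.gcd_dvd_right _ _
  have h2s : D ∣ q ^ (2 * s) - 1 := by
    have e : q ^ (2 * s) - 1 = (q ^ s + 1) * (q ^ s - 1) := by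
      rw [← Nat.sq_sub_sq (q ^ s) 1, ← pow_mul, mul_comm s 2]
    rw [e]; exact hDs.mul_right _
  have hg : D ∣ q ^ (Nat.gcd (2 * s) m) - 1 := by
    rw [← Nat.pow_sub_one_gcd_pow_sub_one]; exact Nat.dvd_gcd h2s hDm
  constructor
  · intro hodd
    have e : Nat.gcd (2 * s) m = 1 :=
      Nat.Coprime.mul_left (Nat.coprime_two_left.mpr hodd) hs
    rw [e, key, pow_one] at hg
    apply Nat.dvd_antisymm
    · have h3 : q ^ s + 1 ≡ 2 [MOD D] := by
        have := (hg.pow s).symm.add_right 1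
        simpa using this
      exact (h3.dvd_iff dvd_rfl).mp hDs
    · apply Nat.dvd_gcd
      · exact (hq.pow.add_one).two_dvd
      · exact (Nat.Odd.sub_odd hq.pow odd_one).two_dvd
  · intro hev
    have hso : Odd s := by
      rw [← Nat.not_even_iff_odd]
      intro h
      have := Nat.dvd_gcd h.two_dvd hev.two_dvd
      rw [hs] at this
      omega
    obtain ⟨k, rfl⟩ := hev.two_dvd
    have e : Nat.gcd (2 * s) (2 * k) = 2 := by
      rw [Nat.gcd_mul_left, (hs.coprime_dvd_right (Dvd.intro_left 2 rfl) : Nat.gcd s k = 1)]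
    rw [e, key] at hg
    apply Nat.dvd_antisymm
    · obtain ⟨j, rfl⟩ := hso
      have h3 : q ^ (2 * j + 1) + 1 ≡ q + 1 [MOD D] := by
        have := (((hg.pow j).symm.mul_right q).add_right 1)
        rwa [← pow_mul, ← pow_succ, one_pow, one_mul] at this
      exact (h3.dvd_iff dvd_rfl).mp hDs
    · apply Nat.dvd_gcd
      · simpa using hso.nat_add_dvd_pow_add_pow q 1
      · have : q + 1 ∣ q ^ 2 - 1 := by
          have := Nat.sq_sub_sq q 1
          rw [one_pow] at this
          rw [this]; exact Dvd.intro _ rfl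
        rw [key] at this ⊢
        have := this.pow k
        rwa [one_pow, ← pow_mul] at this

theorem gcd_odd_prime_pow_add_one
    (p t n : ℕ) (hp : p.Prime) (hodd : Odd p) (ht : 1 ≤ t) (htn : t ≤ n) :
    (Odd (n / Nat.gcd n t) → Nat.gcd (p ^ t + 1) (p ^ n - 1) = 2) ∧
    (Even (n / Nat.gcd n t) →
      Nat.gcd (p ^ t + 1) (p ^ n - 1) = p ^ Nat.gcd t n + 1) := by
  have hd : 0 < Nat.gcd t n := Nat.gcd_pos_of_pos_left _ ht
  have h := gcd_aux (p ^ Nat.gcd t n) (t / Nat.gcd t n) (n / Nat.gcd t n) hodd.pow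
    (Nat.div_pos (Nat.gcd_le_right _ (by omega)) hd) (Nat.coprime_div_gcd_div_gcd hd)
  rw [← pow_mul, ← pow_mul, Nat.mul_div_cancel' (Nat.gcd_dvd_left t n),
    Nat.mul_div_cancel' (Nat.gcd_dvd_right t n)] at h
  rw [Nat.gcd_comm n t]
  exact h
end

section
/- Let t and n be integers with 1 ≤ t ≤ n, and suppose that either n is odd, or n ≡ 2 (mod 4) and t is even. Then gcd(2^t + 1, 2^n − 1) = 1, and for every odd prime p, gcd(p^t + 1, p^n − 1) = 2. -/
theorem gcd_aux_s18 (t n p : ℕ) (hp : 1 ≤ p)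
    (h : Odd n ∨ (n % 4 = 2 ∧ Even t)) : Nat.gcd (p ^ t + 1) (p ^ n - 1) ∣ 2 := by
  obtain ⟨m, hm, k, hk⟩ : ∃ m, Odd m ∧ n ∣ t * m := by
    rcases h with h | ⟨h, s, hs⟩
    · exact ⟨n, h, Dvd.intro_left t rfl⟩
    · refine ⟨n / 2, Nat.odd_iff.mpr (by omega), s, ?_⟩
      have h2 : n = 2 * (n / 2) := by omega
      generalize n / 2 = q at *
      subst h2 hs
      ring
  have h1 : Nat.gcd (p ^ t + 1) (p ^ n - 1) ∣ p ^ (t * m) + 1 := by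
    have := Odd.nat_add_dvd_pow_add_pow (p ^ t) 1 hm
    rw [one_pow, ← pow_mul] at this
    exact (Nat.gcd_dvd_left _ _).trans this
  have h2 : Nat.gcd (p ^ t + 1) (p ^ n - 1) ∣ p ^ (t * m) - 1 := by
    have := Nat.sub_dvd_pow_sub_pow (p ^ n) 1 k
    rw [one_pow, ← pow_mul, ← hk] at this
    exact (Nat.gcd_dvd_right _ _).trans this
  have h3 := Nat.dvd_sub h1 h2
  have h4 : 1 ≤ p ^ (t * m) := Nat.one_le_pow _ _ hp
  have h5 : p ^ (t * m) + 1 - (p ^ (t * m) - 1) = 2 := by omega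
  rwa [h5] at h3

theorem gcd_pow_add_one_special_cases
    (t n : ℕ) (ht : 1 ≤ t) (htn : t ≤ n)
    (h : Odd n ∨ (n % 4 = 2 ∧ Even t)) :
    Nat.gcd (2 ^ t + 1) (2 ^ n - 1) = 1 ∧
    ∀ p : ℕ, p.Prime → Odd p → Nat.gcd (p ^ t + 1) (p ^ n - 1) = 2 := by
  constructor
  · rcases (Nat.dvd_prime Nat.prime_two).mp (gcd_aux_s18 t n 2 (by norm_num) h) with h1 | h1
    · exact h1
    · exfalso
      have h2 := Nat.gcd_dvd_left (2 ^ t + 1) (2 ^ n - 1)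
      rw [h1] at h2
      have h3 : 2 ∣ 2 ^ t := dvd_pow_self 2 (by omega)
      omega
  · intro p hp ho
    apply Nat.dvd_antisymm (gcd_aux_s18 t n p hp.one_le h)
    have a := Nat.odd_iff.mp (ho.pow (n := t))
    have b := Nat.odd_iff.mp (ho.pow (n := n))
    exact Nat.dvd_gcd (by omega) (by omega)
end

section
/- Let G : F_{2^8} → F_{2^8} be given by G(x) = x^{254} + x^{16}. Then there exists c ∈ F_{2^8} with c ≠ 1 such that the c-differential uniformity of G satisfies δ_{G,c} ≥ 18. -/
open Finset

theorem cdu_aes_perturbed_ge_eighteen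
    {F : Type*} [Field F] [Fintype F] [DecidableEq F]
    (hF : Fintype.card F = 2 ^ 8)
    (G : F → F) (hG : ∀ x : F, G x = x ^ 254 + x ^ 16) :
    ∃ c : F, c ≠ 1 ∧ 18 ≤ cdu G c := by
  have h2 : (2 : F) = 0 := by
    have h : ((Fintype.card F : ℕ) : F) = 0 := Nat.cast_card_eq_zero F
    rw [hF] at h
    rw [Nat.cast_pow, Nat.cast_ofNat] at h
    exact pow_eq_zero_iff (n := 8) (by norm_num) |>.1 h
  refine ⟨0, zero_ne_one, ?_⟩
  -- a primitive 17-th root of unity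
  obtain ⟨g, hg⟩ := IsCyclic.exists_ofOrder_eq_natCard (α := Fˣ)
  have hcard : Nat.card Fˣ = 255 := by
    rw [Nat.card_eq_fintype_card, Fintype.card_units, hF]
    norm_num
  rw [hcard] at hg
  have hprim : IsPrimitiveRoot ((g : F) ^ 15) 17 := by
    have h : IsPrimitiveRoot (g : F) 255 := by
      rw [← hg, IsPrimitiveRoot.coe_units_iff]
      exact IsPrimitiveRoot.orderOf g
    exact h.pow (by norm_num) (by norm_num)
  have h17 := hprim.card_nthRootsFinset
  have h0 : (0 : F) ∉ Polynomial.nthRootsFinset 17 (1 : F) := by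
    rw [Polynomial.mem_nthRootsFinset (by norm_num)]
    simp
  have hle : 18 ≤ cddt G 0 0 0 := by
    have hc : (insert (0 : F) (Polynomial.nthRootsFinset 17 (1 : F))).card = 18 := by
      rw [Finset.card_insert_of_notMem h0, h17]
    rw [← hc]
    apply Finset.card_le_card
    intro x hx
    simp only [Finset.mem_filter, Finset.mem_univ, true_and, add_zero, zero_mul, sub_zero, hG]
    rcases Finset.mem_insert.1 hx with rfl | hx
    · simp
    · rw [Polynomial.mem_nthRootsFinset (by norm_num)] at hx
      have e : x ^ 254 = x ^ 16 := by
        rw [show 254 = 17 * 14 + 16 by norm_num, pow_add, pow_mul, hx, one_pow, one_mul]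
      rw [e, ← two_mul, h2, zero_mul]
  refine hle.trans ?_
  exact Finset.le_sup (f := fun p : F × F => cddt G 0 p.1 p.2) (b := ((0 : F), (0 : F)))
    (by simp)
end
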